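/- arXiv:2308.04752 — 2 statements merged into one kernel-verified Lean document; each statement's English description precedes it below -/
import Mathlib

section
/- For every prime m ≥ 5, there exist positive integers A and B with B < A such that b_6(An + B) ≡ 0 (mod m) for all nonnegative integers n. -/
/-- `bReg k n` is the number of `k`-regular partitions of `n`,
i.e. partitions of `n` in which no part is divisible by `k`. -/
noncomputable def bReg (k n : ℕ) : ℕ :=
  (Finset.univ.filter fun p : n.Partition => ∀ i ∈ p.parts, ¬ k ∣ i).card

namespace B6
section P1

/-- `U`-operator on sequences. -/
def seqU {R : Type*} (Q : ℕ) (a : ℕ → R) : ℕ → R := fun n => a (Q * n)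

/-- `V`-operator on sequences. -/
def seqV {R : Type*} [Zero R] (Q : ℕ) (a : ℕ → R) : ℕ → R := fun n => if Q ∣ n then a (n / Q) else 0

/-- Hecke operator on sequences. -/
def seqT {R : Type*} [Ring R] (Q : ℕ) (c : R) (a : ℕ → R) : ℕ → R :=
  fun n => seqU Q a n + c * seqV Q a n

lemma seqU_V {R : Type*} [Zero R] {Q : ℕ} (hQ : 0 < Q) (a : ℕ → R) : seqU Q (seqV Q a) = a := by
  funext n
  simp [seqU, seqV, hQ]

/-- The Chebyshev-like recursion. -/
def seqS {R : Type*} [Ring R] (Q : ℕ) (c : R) (a : ℕ → R) : ℕ → (ℕ → R) × (ℕ → R)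
  | 0 => (0, a)
  | r + 1 => ((seqS Q c a r).2, fun n => seqT Q c (seqS Q c a r).2 n - c * (seqS Q c a r).1 n)

lemma seqS_snd {R : Type*} [CommRing R] {Q : ℕ} (hQ : 0 < Q) (c : R) (a : ℕ → R) (r : ℕ) :
    ∀ n, (seqS Q c a r).2 n = a (Q ^ r * n) + c * seqV Q (seqS Q c a r).1 n := by
  induction r with
  | zero => intro n; simp [seqS, seqV]
  | succ r ih =>
    intro n
    have h1 : seqU Q (seqS Q c a r).2 n
        = a (Q ^ (r + 1) * n) + c * (seqS Q c a r).1 n := by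
      have := ih (Q * n)
      simp only [seqU]
      rw [this, ← mul_assoc, ← pow_succ]
      congr 2
      exact congrFun (seqU_V hQ (seqS Q c a r).1) n
    simp only [seqS, seqT, h1]
    ring

lemma seq_finite_argument {R : Type*} [CommRing R] {Q : ℕ} (hQ : 0 < Q) (c : R) (hc : IsUnit c)
    (V : Set (ℕ → R)) (hfin : V.Finite) (h0 : (0 : ℕ → R) ∈ V)
    (hV : ∀ u ∈ V, ∀ v ∈ V, (fun n => seqT Q c v n - c * u n) ∈ V)
    (a : ℕ → R) (ha : a ∈ V) :
    ∃ r : ℕ, ∀ n, ¬ Q ∣ n → a (Q ^ r * n) = 0 := by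
  classical
  let X := V ×ˢ V
  have hX : X.Finite := hfin.prod hfin
  have : Finite X := hX
  let φ : X → X := fun x => ⟨(x.1.2, fun n => seqT Q c x.1.2 n - c * x.1.1 n),
    x.2.2, hV _ x.2.1 _ x.2.2⟩
  have hφ : Function.Injective φ := by
    rintro ⟨⟨u, v⟩, h⟩ ⟨⟨u', v'⟩, h'⟩ he
    have he1 : v = v' := congrArg (fun x : X => x.1.1) he
    have he : (fun n => seqT Q c v n - c * u n) = (fun n => seqT Q c v' n - c * u' n) :=
      congrArg (fun x : X => x.1.2) he
    subst he1
    congr 2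
    funext n
    have := congrFun he n
    simp only [sub_right_inj] at this
    exact hc.mul_left_cancel this
  let e : Equiv.Perm X := Equiv.ofBijective φ (Finite.injective_iff_bijective.mp hφ)
  obtain ⟨R', hR, hR'⟩ : ∃ n, 0 < n ∧ e ^ n = 1 := by
    have := isOfFinOrder_of_finite e
    exact isOfFinOrder_iff_pow_eq_one.mp this
  let x0 : X := ⟨(0, a), h0, ha⟩
  have key : ∀ r, ((e ^ r) x0).1 = seqS Q c a r := by
    intro r
    induction r with
    | zero => rfl
    | succ r ih =>
      rw [pow_succ', Equiv.Perm.mul_apply]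
      change (φ ((e ^ r) x0)).1 = _
      simp only [φ, ih, seqS]
  obtain ⟨r, rfl⟩ : ∃ r, R' = r + 1 := ⟨R' - 1, by omega⟩
  refine ⟨r, fun n hn => ?_⟩
  have h1 := key (r + 1)
  rw [hR'] at h1
  have h2 : (seqS Q c a r).2 = 0 := by
    have := congrArg Prod.fst h1
    simpa [seqS, x0] using this.symm
  have h3 := seqS_snd hQ c a r n
  rw [h2] at h3
  simp [seqV, hn] at h3
  exact h3.symm

end P1
end B6

namespace B6
section P2
open UpperHalfPlane ModularForm Matrix Matrix.SpecialLinearGroup Filter Asymptotics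
open scoped MatrixGroups Manifold ModularForm

/-- An integer matrix with nonzero determinant as an element of `GL(2, ℝ)`. -/
noncomputable def gm (A : Matrix (Fin 2) (Fin 2) ℤ) : GL (Fin 2) ℝ :=
  if h : (A.map (Int.cast : ℤ → ℝ)).det ≠ 0 then GeneralLinearGroup.mkOfDetNeZero _ h else 1

lemma det_map_cast (A : Matrix (Fin 2) (Fin 2) ℤ) :
    (A.map (Int.cast : ℤ → ℝ)).det = (A.det : ℝ) := by
  simp [Matrix.det_fin_two]

lemma gm_val {A : Matrix (Fin 2) (Fin 2) ℤ} (h : A.det ≠ 0) :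
    (gm A : Matrix (Fin 2) (Fin 2) ℝ) = A.map (Int.cast : ℤ → ℝ) := by
  have : (A.map (Int.cast : ℤ → ℝ)).det ≠ 0 := by
    rw [det_map_cast]; exact_mod_cast h
  simp [gm, this, GeneralLinearGroup.mkOfDetNeZero]

lemma gm_mul {A B : Matrix (Fin 2) (Fin 2) ℤ} (hA : A.det ≠ 0) (hB : B.det ≠ 0) :
    gm (A * B) = gm A * gm B := by
  apply Units.ext
  have hAB : (A * B).det ≠ 0 := by rw [Matrix.det_mul]; exact mul_ne_zero hA hB
  rw [Units.val_mul, gm_val hA, gm_val hB, gm_val hAB]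
  exact Matrix.map_mul (f := Int.castRingHom ℝ)

lemma gm_SL (γ : SL(2, ℤ)) : gm γ.1 = (γ : GL (Fin 2) ℝ) := by
  apply Units.ext
  rw [gm_val (by rw [γ.2]; exact one_ne_zero)]
  ext i j
  simp

lemma slash_gm_mul (f : ℍ → ℂ) (k : ℤ) {A : Matrix (Fin 2) (Fin 2) ℤ} (hA : A.det ≠ 0)
    (γ : SL(2, ℤ)) : (f ∣[k] (gm A)) ∣[k] γ = f ∣[k] (gm (A * γ.1)) := by
  rw [SL_slash, gm_mul hA (by rw [γ.2]; exact one_ne_zero), SlashAction.slash_mul, gm_SL]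

lemma slash_SL_gm (f : ℍ → ℂ) (k : ℤ) {A : Matrix (Fin 2) (Fin 2) ℤ} (hA : A.det ≠ 0)
    (γ : SL(2, ℤ)) : (f ∣[k] γ) ∣[k] (gm A) = f ∣[k] (gm (γ.1 * A)) := by
  rw [SL_slash, gm_mul (by rw [γ.2]; exact one_ne_zero) hA, SlashAction.slash_mul, gm_SL]

/-- Hermite normal form. -/
lemma exists_hnf (A : Matrix (Fin 2) (Fin 2) ℤ) (hA : 0 < A.det) :
    ∃ (γ : SL(2, ℤ)) (x y w : ℤ), 0 < x ∧ 0 < w ∧ x * w = A.det ∧ A = γ.1 * !![x, y; 0, w] := by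
  set a := A 0 0 with ha
  set b := A 0 1 with hb
  set c := A 1 0 with hc
  set d := A 1 1 with hd
  have hdet : A.det = a * d - b * c := by rw [Matrix.det_fin_two]
  have hg : Int.gcd a c ≠ 0 := by
    intro h
    rw [Int.gcd_eq_zero_iff] at h
    rw [hdet, h.1, h.2] at hA
    simp at hA
  have hg0 : (0 : ℤ) < Int.gcd a c := by positivity
  obtain ⟨u, hu⟩ : (Int.gcd a c : ℤ) ∣ a := Int.gcd_dvd_left ..
  obtain ⟨v, hv⟩ : (Int.gcd a c : ℤ) ∣ c := Int.gcd_dvd_right ..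
  have hbez := Int.gcd_eq_gcd_ab a c
  set g : ℤ := (Int.gcd a c : ℤ) with hgdef
  set s := Int.gcdA a c
  set t := Int.gcdB a c
  have h1 : u * s + v * t = 1 := by
    have : g * (u * s + v * t) = g * 1 := by
      rw [mul_one]; nth_rewrite 2 [hbez]; rw [hu, hv]; ring
    exact mul_left_cancel₀ hg0.ne' this
  have hAe : A = !![a, b; c, d] := by
    ext i j; fin_cases i <;> fin_cases j <;> rfl
  have hw : g * (u * d - v * b) = A.det := by rw [hdet]; rw [hu, hv]; ring
  refine ⟨⟨!![u, -t; v, s], by rw [Matrix.det_fin_two_of]; linarith⟩, g, s * b + t * d,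
    u * d - v * b, hg0, ?_, hw, ?_⟩
  · rw [← hw] at hA
    exact (pos_iff_pos_of_mul_pos hA).mp hg0
  · rw [hAe]
    ext i j; fin_cases i <;> fin_cases j
    · simp [Matrix.mul_apply, Fin.sum_univ_two]; rw [mul_comm]; exact hu
    · simp [Matrix.mul_apply, Fin.sum_univ_two]; linear_combination (-b) * h1
    · simp [Matrix.mul_apply, Fin.sum_univ_two]; rw [mul_comm]; exact hv
    · simp [Matrix.mul_apply, Fin.sum_univ_two]; linear_combination (-d) * h1

lemma gm_ut_det {x y w : ℤ} (hx : 0 < x) (hw : 0 < w) :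
    (!![x, y; 0, w] : Matrix (Fin 2) (Fin 2) ℤ).det ≠ 0 := by
  rw [Matrix.det_fin_two_of]; simp; omega

lemma coe_gm_ut_smul {x y w : ℤ} (hx : 0 < x) (hw : 0 < w) (τ : ℍ) :
    ((gm !![x, y; 0, w] • τ : ℍ) : ℂ) = ((x : ℂ) * τ + y) / w := by
  have hd : 0 < (gm !![x, y; 0, w]).det.val := by
    rw [GeneralLinearGroup.val_det_apply, gm_val (gm_ut_det hx hw), det_map_cast,
      Matrix.det_fin_two_of]
    have : 0 < x * w := by positivity
    simpa using (by exact_mod_cast this : (0:ℝ) < x * w)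
  rw [coe_smul_of_det_pos hd]
  simp [num, denom, gm_val (gm_ut_det hx hw)]

lemma im_gm_ut_smul {x y w : ℤ} (hx : 0 < x) (hw : 0 < w) (τ : ℍ) :
    (gm !![x, y; 0, w] • τ : ℍ).im = x / w * τ.im := by
  rw [← coe_im, coe_gm_ut_smul hx hw]
  rw [show ((x:ℂ) * τ + y) / w = ((x / w : ℝ) : ℂ) * τ + ((y / w : ℝ) : ℂ) by push_cast; ring]
  rw [Complex.add_im, Complex.im_ofReal_mul, Complex.ofReal_im]
  simp

lemma slash_gm_ut {x y w : ℤ} (hx : 0 < x) (hw : 0 < w) (f : ℍ → ℂ) (k : ℤ) (τ : ℍ) :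
    (f ∣[k] (gm !![x, y; 0, w])) τ
      = f (gm !![x, y; 0, w] • τ) * ((x * w : ℂ) ^ (k - 1) * (w : ℂ) ^ (-k)) := by
  have h0 : (gm !![x, y; 0, w]).det.val = x * w := by
    rw [GeneralLinearGroup.val_det_apply, gm_val (gm_ut_det hx hw), det_map_cast,
      Matrix.det_fin_two_of]
    simp
  have hpos : (0 : ℝ) < x * w := by
    have : 0 < x * w := by positivity
    exact_mod_cast this
  rw [slash_apply, h0, abs_of_pos hpos]
  simp only [σ, h0, hpos, if_true]
  simp [denom, gm_val (gm_ut_det hx hw), mul_assoc]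

/-- Exponential growth at `i∞` (in units adapted to width `144`). -/
def Gr (f : ℍ → ℂ) (e : ℝ) : Prop :=
  f =O[atImInfty] fun τ => Real.exp (2 * Real.pi * e / 144 * τ.im)

lemma Gr.mono {f : ℍ → ℂ} {e e' : ℝ} (h : Gr f e) (he : e ≤ e') : Gr f e' := by
  refine h.trans (IsBigO.of_bound 1 (Eventually.of_forall fun τ => ?_))
  rw [one_mul, Real.norm_eq_abs, Real.norm_eq_abs, abs_of_pos (Real.exp_pos _),
    abs_of_pos (Real.exp_pos _), Real.exp_le_exp]
  have := τ.im_pos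
  have := Real.pi_pos
  gcongr

lemma Gr.mul {f g : ℍ → ℂ} {e e' : ℝ} (h : Gr f e) (h' : Gr g e') : Gr (f * g) (e + e') := by
  have := IsBigO.mul h h'
  refine this.congr_right fun τ => ?_
  rw [← Real.exp_add]
  ring_nf

lemma Gr.add {f g : ℍ → ℂ} {e : ℝ} (h : Gr f e) (h' : Gr g e) : Gr (f + g) e := IsBigO.add h h'

lemma Gr.smul {f : ℍ → ℂ} {e : ℝ} (h : Gr f e) (c : ℂ) : Gr (c • f) e := IsBigO.const_smul_left h c

lemma Gr.sum {ι : Type*} {s : Finset ι} {f : ι → ℍ → ℂ} {e : ℝ} (h : ∀ i ∈ s, Gr (f i) e) :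
    Gr (∑ i ∈ s, f i) e := by
  unfold Gr
  have : (∑ i ∈ s, f i) = fun τ => ∑ i ∈ s, f i τ := by ext; simp
  rw [this]
  exact IsBigO.fun_sum h

lemma Gr.pow {f : ℍ → ℂ} {e : ℝ} (h : Gr f e) (n : ℕ) : Gr (f ^ n) (n * e) := by
  have := IsBigO.pow h n
  refine this.congr_right fun τ => ?_
  rw [← Real.exp_nat_mul]
  ring_nf

lemma Gr.slash_ut {x y w : ℤ} (hx : 0 < x) (hw : 0 < w) {f : ℍ → ℂ} (k : ℤ) {e : ℝ} (h : Gr f e) :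
    Gr (f ∣[k] (gm !![x, y; 0, w])) (e * (x / w)) := by
  have h1 : gm !![x, y; 0, w] 1 0 = 0 := by simp [gm_val (gm_ut_det hx hw)]
  have h2 := h.comp_tendsto (tendsto_smul_atImInfty h1)
  have h3 : f ∣[k] (gm !![x, y; 0, w]) = fun τ => ((x * w : ℂ) ^ (k - 1) * (w : ℂ) ^ (-k)) *
      (f ∘ fun τ => gm !![x, y; 0, w] • τ) τ := by
    ext τ
    rw [slash_gm_ut hx hw, mul_comm]
    rfl
  unfold Gr
  rw [h3]
  refine (h2.const_mul_left _).congr_right fun τ => ?_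
  simp only [Function.comp, im_gm_ut_smul hx hw]
  congr 1; ring

lemma Gr_zero_iff {f : ℍ → ℂ} : Gr f 0 ↔ IsBoundedAtImInfty f := by
  unfold Gr IsBoundedAtImInfty BoundedAtFilter
  have : (fun τ : ℍ => Real.exp (2 * Real.pi * 0 / 144 * τ.im)) = 1 := by
    ext; simp
  rw [this]

end P2
end B6

namespace B6
section P3
open UpperHalfPlane ModularForm Matrix Matrix.SpecialLinearGroup Filter Asymptotics
open scoped MatrixGroups Manifold ModularForm

/-- The quadratic character `(24 / ·)`. -/
def epsZ (x : ZMod 24) : ℤ :=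
  if x = 1 ∨ x = 5 ∨ x = 19 ∨ x = 23 then 1 else
  if x = 7 ∨ x = 11 ∨ x = 13 ∨ x = 17 then -1 else 0

/-- The quadratic character `(24 / ·)` on integers. -/
def eps (d : ℤ) : ℤ := epsZ (d : ZMod 24)

lemma epsZ_mul : ∀ x y : ZMod 24, epsZ (x * y) = epsZ x * epsZ y := by decide

lemma epsZ_sq : ∀ x y : ZMod 24, x * y = 1 → epsZ x * epsZ x = 1 := by decide

lemma eps_mul (x y : ℤ) : eps (x * y) = eps x * eps y := by simp [eps, epsZ_mul]

lemma eps_congr {x y : ℤ} (h : (24 : ℤ) ∣ x - y) : eps x = eps y := by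
  unfold eps
  congr 1
  have := (ZMod.intCast_zmod_eq_zero_iff_dvd (x - y) 24).mpr (by exact_mod_cast h)
  push_cast at this
  exact sub_eq_zero.mp this

lemma eps_sq {x : ℤ} (h : IsCoprime x 24) : eps x * eps x = 1 := by
  obtain ⟨u, v, huv⟩ := h
  apply epsZ_sq _ (u : ZMod 24)
  have := congrArg (Int.cast : ℤ → ZMod 24) huv
  push_cast at this
  rw [show ((24 : ZMod 24)) = 0 from rfl] at this
  linear_combination this

/-- `144`-periodicity. -/
def Per (f : ℍ → ℂ) : Prop := ∀ τ : ℍ, f ((144 : ℝ) +ᵥ τ) = f τ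

lemma Per.periodic {f : ℍ → ℂ} (h : Per f) : Function.Periodic (f ∘ ofComplex) ((144 : ℝ) : ℂ) := by
  intro w
  by_cases hw : 0 < w.im
  · have : (144 : ℝ) +ᵥ (⟨w, hw⟩ : ℍ) = ⟨w + (144 : ℝ), by simpa using hw⟩ := by
      ext; simp [add_comm]
    have := h ⟨w, hw⟩
    simp only [Function.comp_apply]
    rw [ofComplex_apply_of_im_pos hw, ofComplex_apply_of_im_pos (by simpa using hw)]
    rw [← this]
    congr 1
    ext
    simp [add_comm]
  · have hw' : w.im ≤ 0 := not_lt.mp hw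
    simp only [Function.comp_apply]
    rw [ofComplex_apply_of_im_nonpos hw', ofComplex_apply_of_im_nonpos (by simpa using hw')]

/-- The local parameter. -/
noncomputable def qq (τ : ℍ) : ℂ := Function.Periodic.qParam 144 τ

lemma qq_ne (τ : ℍ) : qq τ ≠ 0 := Function.Periodic.qParam_ne_zero _

lemma norm_qq (τ : ℍ) : ‖qq τ‖ = Real.exp (-(2 * Real.pi / 144 * τ.im)) := by
  rw [qq, Function.Periodic.norm_qParam]
  congr 1
  simp
  ring

lemma qq_lt (τ : ℍ) : ‖qq τ‖ < 1 := Function.Periodic.norm_qParam_lt_one (by norm_num) τ.im_pos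

lemma qq_mdiff : MDiff qq := by
  rw [UpperHalfPlane.mdifferentiable_iff]
  refine (Function.Periodic.differentiable_qParam (h := 144)).differentiableOn.congr fun z hz => ?_
  simp [qq, ofComplex_apply_of_im_pos hz]

lemma qq_per : Per qq := by
  intro τ
  unfold qq
  simp only [coe_vadd, Function.Periodic.qParam]
  rw [Complex.exp_eq_exp_iff_exists_int]
  refine ⟨1, ?_⟩
  push_cast
  field_simp
  ring

lemma qq_gr (n : ℤ) : Gr (fun τ => qq τ ^ n) (-n) := by
  unfold Gr
  refine IsBigO.of_bound 1 (Eventually.of_forall fun τ => ?_)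
  rw [norm_zpow, norm_qq, ← Real.rpow_intCast, ← Real.exp_mul, one_mul, Real.norm_eq_abs, abs_of_pos (Real.exp_pos _)]
  apply le_of_eq
  congr 1; ring

lemma Gr.zero_of_neg {f : ℍ → ℂ} {e : ℝ} (h : Gr f e) (he : e < 0) : IsZeroAtImInfty f := by
  refine IsBigO.trans_tendsto h ?_
  have h1 : Tendsto (fun τ : ℍ => 2 * Real.pi * e / 144 * τ.im) atImInfty atBot := by
    have : Tendsto (fun τ : ℍ => τ.im) atImInfty atTop := tendsto_comap
    refine this.const_mul_atTop_of_neg ?_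
    have := Real.pi_pos
    have : 2 * Real.pi * e < 0 := by apply mul_neg_of_pos_of_neg <;> [positivity; assumption]
    linarith
  exact Real.tendsto_exp_atBot.comp h1

lemma Gr.improve {f : ℍ → ℂ} {r : ℝ} (h : Gr f r) (hol : MDiff f) (per : Per f) (j : ℤ)
    (hj : r < j + 1) : Gr f j := by
  set g : ℍ → ℂ := f * fun τ => qq τ ^ (j + 1) with hg
  have g1 : Gr g (r + -((j + 1 : ℤ) : ℝ)) := h.mul (qq_gr (j + 1))
  have g2 : MDiff g := by
    refine hol.mul ?_
    rw [UpperHalfPlane.mdifferentiable_iff]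
    have := UpperHalfPlane.mdifferentiable_iff.mp qq_mdiff
    have h2 : ((fun τ => qq τ ^ (j + 1)) ∘ ofComplex) = fun z => (qq ∘ ofComplex) z ^ (j + 1) := rfl
    rw [h2]
    exact this.zpow (Or.inl fun z hz => qq_ne _)
  have g3 : Per g := by
    intro τ
    simp only [hg, Pi.mul_apply, per τ, qq_per τ]
  have g4 : IsZeroAtImInfty g := g1.zero_of_neg (by push_cast; linarith)
  have g5 : IsBoundedAtImInfty g := g4.isBoundedAtImInfty
  have g6 := g4.exp_decay_atImInfty (h := 144) (by norm_num) g3.periodic g2 g5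
  have g7 : Gr g (-1) := by
    refine g6.congr_right fun τ => ?_
    congr 1; ring
  have g8 := g7.mul (qq_gr (-(j + 1)))
  convert g8 using 1
  · ext τ
    simp only [hg, Pi.mul_apply, mul_assoc]
    rw [← zpow_add₀ (qq_ne τ)]
    simp
  · push_cast; ring

/-- Holomorphic functions transforming like modular forms with character `eps` on the group
of matrices with off-diagonal entries divisible by `144`, with growth `e` at all cusps. -/
structure Cl (k : ℤ) (e : ℝ) (f : ℍ → ℂ) : Prop where
  hol : MDiff f
  inv : ∀ γ : SL(2, ℤ), (144 : ℤ) ∣ γ 0 1 → (144 : ℤ) ∣ γ 1 0 → f ∣[k] γ = (eps (γ 1 1) : ℂ) • f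
  gr : ∀ γ : SL(2, ℤ), Gr (f ∣[k] γ) e

lemma Cl.hol_slash {k : ℤ} {e : ℝ} {f : ℍ → ℂ} (h : Cl k e f) (γ : SL(2, ℤ)) : MDiff (f ∣[k] γ) :=
  h.hol.slash k _

lemma Cl.per_slash {k : ℤ} {e : ℝ} {f : ℍ → ℂ} (h : Cl k e f) (γ : SL(2, ℤ)) :
    Per (f ∣[k] γ) := by
  have h1 : (f ∣[k] γ) ∣[k] (ModularGroup.T ^ (144 : ℤ)) = f ∣[k] γ := by
    rw [← SlashAction.slash_mul]
    have : γ * ModularGroup.T ^ (144 : ℤ) = (γ * ModularGroup.T ^ (144 : ℤ) * γ⁻¹) * γ := by group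
    rw [this, SlashAction.slash_mul]
    set δ := γ * ModularGroup.T ^ (144 : ℤ) * γ⁻¹ with hδ
    have hdet : γ 0 0 * γ 1 1 - γ 0 1 * γ 1 0 = 1 := by
      have := γ.2; rwa [Matrix.det_fin_two] at this
    have e1 : δ.1 = γ.1 * !![1, 144; 0, 1] * !![γ 1 1, -γ 0 1; -γ 1 0, γ 0 0] := by
      rw [hδ, Matrix.SpecialLinearGroup.coe_mul, Matrix.SpecialLinearGroup.coe_mul,
        ModularGroup.coe_T_zpow, SpecialLinearGroup.SL2_inv_expl]
      rfl
    have e01 : δ 0 1 = 144 * (γ 0 0 * γ 0 0) := by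
      change δ.1 0 1 = _
      rw [e1]; simp [Matrix.mul_apply, Fin.sum_univ_two]; ring
    have e10 : δ 1 0 = 144 * (- (γ 1 0 * γ 1 0)) := by
      change δ.1 1 0 = _
      rw [e1]; simp [Matrix.mul_apply, Fin.sum_univ_two]; ring
    have e11 : δ 1 1 = 1 + 144 * (γ 1 0 * γ 0 0) := by
      change δ.1 1 1 = _
      rw [e1]; simp [Matrix.mul_apply, Fin.sum_univ_two]; linear_combination hdet
    rw [h.inv δ ⟨_, e01⟩ ⟨_, e10⟩]
    have : eps (δ 1 1) = 1 := by
      rw [e11, eps_congr (y := 1) ⟨6 * (γ 1 0 * γ 0 0), by ring⟩]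
      rfl
    rw [this]; simp
  intro τ
  have h2 := congrFun h1 τ
  rw [SL_slash_apply, modular_T_zpow_smul] at h2
  have hd : denom (ModularGroup.T ^ (144 : ℤ) : SL(2, ℤ)) (τ : ℂ) = 1 := by
    rw [ModularGroup.denom_apply]
    change (((ModularGroup.T ^ (144 : ℤ)).1 1 0 : ℤ) : ℂ) * τ
      + (((ModularGroup.T ^ (144 : ℤ)).1 1 1 : ℤ) : ℂ) = 1
    rw [ModularGroup.coe_T_zpow]
    simp
  rw [hd] at h2
  simpa using h2

end P3
end B6

namespace B6
section P4
open UpperHalfPlane ModularForm Matrix Matrix.SpecialLinearGroup Filter Asymptotics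
open scoped MatrixGroups Manifold ModularForm

/-- Hecke coset representatives. -/
def rep (Q : ℕ) : Option (ZMod Q) → Matrix (Fin 2) (Fin 2) ℤ
  | none => !![(Q : ℤ), 0; 0, 1]
  | some j => !![1, 144 * (j.val : ℤ); 0, (Q : ℤ)]

/-- Hecke coefficients. -/
def cf (Q : ℕ) : Option (ZMod Q) → ℤ
  | none => eps Q
  | some _ => 1

/-- Hecke operator. -/
noncomputable def heckeT (Q : ℕ) [NeZero Q] (k : ℤ) (f : ℍ → ℂ) : ℍ → ℂ :=
  ∑ i : Option (ZMod Q), (cf Q i : ℂ) • (f ∣[k] (gm (rep Q i)))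

lemma rep_det (Q : ℕ) (i : Option (ZMod Q)) : (rep Q i).det = Q := by
  cases i <;> simp [rep, Matrix.det_fin_two_of]

/-- The permutation of the projective line. -/
def phi {Q : ℕ} [Fact Q.Prime] (a b c d : ZMod Q) : Option (ZMod Q) → Option (ZMod Q)
  | none => if c = 0 then none else some (d / (144 ^ 2 * c))
  | some j => if a + 144 ^ 2 * j * c = 0 then none else some ((b + j * d) / (a + 144 ^ 2 * j * c))

lemma phi_inj {Q : ℕ} [Fact Q.Prime] (h144 : (144 : ZMod Q) ≠ 0) (a b c d : ZMod Q)
    (h : a * d - 144 ^ 2 * b * c = 1) : Function.Injective (phi a b c d) := by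
  have h2 : (144 : ZMod Q) ^ 2 ≠ 0 := pow_ne_zero _ h144
  rintro (_ | i) (_ | j) hij
  · rfl
  · exfalso
    simp only [phi] at hij
    split_ifs at hij with h3 h4 h4
    · rw [h3] at h h4; simp only [mul_zero, add_zero] at h4; rw [h4] at h; simp at h
    · have := Option.some.inj hij
      rw [div_eq_div_iff (mul_ne_zero h2 h3) h4] at this
      exact one_ne_zero (h.symm.trans (by linear_combination this))
  · exfalso
    simp only [phi] at hij
    split_ifs at hij with h4 h3 h3
    · rw [h3] at h h4; simp only [mul_zero, add_zero] at h4; rw [h4] at h; simp at h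
    · have := Option.some.inj hij
      rw [div_eq_div_iff h4 (mul_ne_zero h2 h3)] at this
      exact one_ne_zero (h.symm.trans (by linear_combination -this))
  · simp only [phi] at hij
    split_ifs at hij with h3 h4 h4
    · congr 1
      have hc : c ≠ 0 := by
        rintro rfl
        simp only [mul_zero, add_zero] at h3
        rw [h3] at h; simp at h
      have : (144 ^ 2 * c) * (i - j) = 0 := by linear_combination h3 - h4
      rcases mul_eq_zero.mp this with h5 | h5
      · exact absurd h5 (mul_ne_zero h2 hc)
      · exact sub_eq_zero.mp h5
    · congr 1
      have := Option.some.inj hij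
      rw [div_eq_div_iff h3 h4] at this
      have : (i - j) * (a * d - 144 ^ 2 * b * c) = 0 := by linear_combination this
      rw [h, mul_one] at this
      exact sub_eq_zero.mp this

lemma zmod_eq_zero {Q : ℕ} {x : ℤ} (h : (x : ZMod Q) = 0) : ∃ u, x = Q * u :=
  (ZMod.intCast_zmod_eq_zero_iff_dvd x Q).mp h

lemma hecke_perm {Q : ℕ} [Fact Q.Prime] (hQ : IsCoprime (Q : ℤ) 144) (γ : SL(2, ℤ))
    (a b c d : ℤ) (hγ : γ.1 = !![a, 144 * b; 144 * c, d]) (i : Option (ZMod Q)) :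
    ∃ δ : SL(2, ℤ), rep Q i * γ.1 = δ.1 * rep Q (phi a b c d i) ∧ (144 : ℤ) ∣ δ 0 1 ∧
      (144 : ℤ) ∣ δ 1 0 ∧ cf Q i * eps (δ 1 1) = eps d * cf Q (phi (a : ZMod Q) b c d i) := by
  have hdet : a * d - 144 ^ 2 * b * c = 1 := by
    have := γ.2
    rw [hγ, Matrix.det_fin_two_of] at this
    linear_combination this
  have hQ24 : IsCoprime (Q : ℤ) 24 := hQ.of_isCoprime_of_dvd_right ⟨6, by norm_num⟩
  have h144 : (144 : ZMod Q) ≠ 0 := by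
    intro h0
    have h1 : ((144 : ℤ) : ZMod Q) = 0 := by exact_mod_cast h0
    rw [ZMod.intCast_zmod_eq_zero_iff_dvd] at h1
    have := hQ.isUnit_of_dvd' dvd_rfl h1
    rw [Int.isUnit_iff] at this
    have := (Fact.out : Q.Prime).two_le
    omega
  rcases i with _ | j
  · by_cases hc : (c : ZMod Q) = 0
    · obtain ⟨u, hu⟩ := zmod_eq_zero hc
      refine ⟨⟨!![a, Q * (144 * b); 144 * u, d], ?_⟩, ?_, ?_, ?_, ?_⟩
      · rw [Matrix.det_fin_two_of]; rw [hu] at hdet; linear_combination hdet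
      · simp only [phi, hc, if_true, rep, hγ]
        ext i j; fin_cases i <;> fin_cases j <;> simp [Matrix.mul_apply, Fin.sum_univ_two, hu] <;> ring
      · exact ⟨Q * b, by simp; ring⟩
      · exact ⟨u, by simp [-ZMod.natCast_val]⟩
      · simp [phi, hc, cf]; ring
    · set j' : ZMod Q := d / (144 ^ 2 * c) with hj'
      have h1 : ((d - 144 ^ 2 * c * (j'.val : ℤ) : ℤ) : ZMod Q) = 0 := by
        have h3 : (144 ^ 2 * c : ZMod Q) ≠ 0 := mul_ne_zero (pow_ne_zero 2 h144) hc
        have h4 : (144 ^ 2 * c : ZMod Q) * j' = d := by rw [hj', mul_div_cancel₀ _ h3]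
        simp only [Int.cast_sub, Int.cast_mul, Int.cast_pow, Int.cast_ofNat, Int.cast_natCast,
          ZMod.natCast_zmod_val, h4, sub_self]
      obtain ⟨u, hu⟩ := zmod_eq_zero h1
      refine ⟨⟨!![Q * a, 144 * (b - j'.val * a); 144 * c, u], ?_⟩, ?_, ?_, ?_, ?_⟩
      · rw [Matrix.det_fin_two_of]; linear_combination hdet - a * hu
      · simp only [phi, hc, if_false, rep, hγ, ← hj']
        ext i j; fin_cases i <;> fin_cases j <;> simp [Matrix.mul_apply, Fin.sum_univ_two, -ZMod.natCast_val]
        · ring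
        · linear_combination hu
      · exact ⟨b - j'.val * a, by simp [-ZMod.natCast_val]⟩
      · exact ⟨c, by simp [-ZMod.natCast_val]⟩
      · simp only [phi, hc, if_false, cf, mul_one]
        change eps Q * eps u = eps d
        rw [← eps_mul]
        exact eps_congr ⟨-(864 * c * j'.val), by linear_combination -hu⟩
  · by_cases hc : (a : ZMod Q) + 144 ^ 2 * j * c = 0
    · have h1 : ((a + 144 ^ 2 * (j.val : ℤ) * c : ℤ) : ZMod Q) = 0 := by
        simp only [Int.cast_add, Int.cast_mul, Int.cast_pow, Int.cast_ofNat, Int.cast_natCast,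
          ZMod.natCast_zmod_val, hc]
      obtain ⟨u, hu⟩ := zmod_eq_zero h1
      refine ⟨⟨!![u, 144 * (b + j.val * d); 144 * c, Q * d], ?_⟩, ?_, ?_, ?_, ?_⟩
      · rw [Matrix.det_fin_two_of]; linear_combination hdet - d * hu
      · simp only [phi, hc, if_true, rep, hγ]
        ext i j; fin_cases i <;> fin_cases j <;> simp [Matrix.mul_apply, Fin.sum_univ_two, -ZMod.natCast_val]
        · linear_combination hu
        · ring
        · ring
      · exact ⟨b + j.val * d, by simp [-ZMod.natCast_val]⟩
      · exact ⟨c, by simp [-ZMod.natCast_val]⟩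
      · simp only [phi, hc, if_true, cf, one_mul]
        change eps (Q * d) = _
        rw [eps_mul, mul_comm]
    · set j' : ZMod Q := (b + j * d) / (a + 144 ^ 2 * j * c) with hj'
      have h1 : ((b + j.val * d - j'.val * (a + 144 ^ 2 * (j.val : ℤ) * c) : ℤ) : ZMod Q) = 0 := by
        have h4 : j' * (a + 144 ^ 2 * j * c) = b + j * d := by rw [hj', div_mul_cancel₀ _ hc]
        simp only [Int.cast_sub, Int.cast_add, Int.cast_mul, Int.cast_pow, Int.cast_ofNat,
          Int.cast_natCast, ZMod.natCast_zmod_val, h4, sub_self]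
      obtain ⟨u, hu⟩ := zmod_eq_zero h1
      refine ⟨⟨!![a + 144 ^ 2 * (j.val : ℤ) * c, 144 * u; Q * (144 * c), d - 144 ^ 2 * c * j'.val],
        ?_⟩, ?_, ?_, ?_, ?_⟩
      · rw [Matrix.det_fin_two_of]; linear_combination hdet + 144 ^ 2 * c * hu
      · simp only [phi, hc, if_false, rep, hγ, ← hj']
        ext i j; fin_cases i <;> fin_cases j <;> simp [Matrix.mul_apply, Fin.sum_univ_two, -ZMod.natCast_val]
        · ring
        · linear_combination 144 * hu
        · ring
      · exact ⟨u, by simp [-ZMod.natCast_val]⟩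
      · exact ⟨Q * c, by simp; ring⟩
      · simp only [phi, hc, if_false, cf, one_mul, mul_one]
        change eps (d - 144 ^ 2 * c * j'.val) = _
        exact eps_congr ⟨-(864 * c * j'.val), by ring⟩

lemma MDiff_sum {ι : Type} (s : Finset ι) (f : ι → ℍ → ℂ) (h : ∀ i ∈ s, MDiff (f i)) :
    MDiff (∑ i ∈ s, f i) := MDifferentiable.sum h

lemma slash_smul_SL (f : ℍ → ℂ) (k : ℤ) (c : ℂ) (γ : SL(2, ℤ)) :
    (c • f) ∣[k] γ = c • (f ∣[k] γ) := SL_smul_slash k γ f c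

lemma smul_slash_gm (f : ℍ → ℂ) (k : ℤ) (c : ℤ) (A : GL (Fin 2) ℝ) :
    ((c : ℂ) • f) ∣[k] A = (c : ℂ) • (f ∣[k] A) := by
  rw [smul_slash]
  congr 1
  exact_mod_cast σ_ofReal A (c : ℝ)

lemma Cl.hecke {Q : ℕ} [hp : Fact Q.Prime] (hQ : IsCoprime (Q : ℤ) 144) {k : ℤ} {e : ℝ} {f : ℍ → ℂ}
    (h : Cl k e f) (he : e ≤ 0) : Cl k (e / Q) (heckeT Q k f) := by
  have hQ0 : 0 < Q := hp.out.pos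
  have hd : ∀ i, (rep Q i).det ≠ 0 := fun i => by rw [rep_det]; exact_mod_cast hQ0.ne'
  constructor
  · apply MDiff_sum
    intro i _
    exact MDifferentiable.const_smul _ (h.hol.slash k _)
  · intro γ h01 h10
    obtain ⟨b, hb⟩ := h01
    obtain ⟨c, hc⟩ := h10
    set a := γ 0 0 with ha
    set d := γ 1 1 with hd'
    have hγ : γ.1 = !![a, 144 * b; 144 * c, d] := by
      ext i j; fin_cases i <;> fin_cases j
      · rfl
      · exact hb
      · exact hc
      · rfl
    have hdet : (a : ZMod Q) * d - 144 ^ 2 * b * c = 1 := by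
      have := γ.2
      rw [hγ, Matrix.det_fin_two_of] at this
      have := congrArg (Int.cast : ℤ → ZMod Q) this
      push_cast at this
      linear_combination this
    have h144 : (144 : ZMod Q) ≠ 0 := by
      intro h0
      have h1 : ((144 : ℤ) : ZMod Q) = 0 := by exact_mod_cast h0
      rw [ZMod.intCast_zmod_eq_zero_iff_dvd] at h1
      have := hQ.isUnit_of_dvd' dvd_rfl h1
      rw [Int.isUnit_iff] at this
      have := hp.out.two_le
      omega
    have hbij := (phi_inj h144 (a : ZMod Q) b c d hdet).bijective_of_finite
    unfold heckeT
    rw [SlashAction.sum_slash, Finset.smul_sum,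
      ← hbij.sum_comp (fun i => (eps d : ℂ) • (cf Q i : ℂ) • (f ∣[k] gm (rep Q i)))]
    refine Finset.sum_congr rfl fun i _ => ?_
    obtain ⟨δ, h1, h2, h3, h4⟩ := hecke_perm hQ γ a b c d hγ i
    rw [slash_smul_SL, slash_gm_mul _ _ (hd i), h1, ← slash_SL_gm _ _ (hd _), h.inv δ h2 h3,
      smul_slash_gm, smul_smul, smul_smul]
    congr 1
    exact_mod_cast h4
  · intro γ
    unfold heckeT
    rw [SlashAction.sum_slash]
    apply Gr.sum
    intro i _
    rw [slash_smul_SL, slash_gm_mul _ _ (hd i)]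
    apply Gr.smul
    have hdd : (rep Q i * γ.1).det = Q := by rw [Matrix.det_mul, γ.2, rep_det, mul_one]
    obtain ⟨δ, x, y, w, hx, hw, hxw, hA⟩ := exists_hnf (rep Q i * γ.1) (by rw [hdd]; exact_mod_cast hQ0)
    rw [hA, ← slash_SL_gm _ _ (gm_ut_det hx hw)]
    refine ((h.gr δ).slash_ut hx hw k).mono ?_
    rw [hdd] at hxw
    have hxw' : (x : ℝ) * w = Q := by exact_mod_cast hxw
    have hw' : (0 : ℝ) < w := by exact_mod_cast hw
    have hx' : (1 : ℝ) ≤ x := by exact_mod_cast hx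
    rw [← hxw', div_eq_mul_inv]
    apply mul_le_mul_of_nonpos_left _ he
    rw [inv_le_iff_one_le_mul₀ (by positivity)]
    field_simp
    nlinarith

end P4
end B6

namespace B6
section P5
open UpperHalfPlane ModularForm Matrix Matrix.SpecialLinearGroup Filter Asymptotics
open scoped MatrixGroups Manifold ModularForm

/-- `f` is represented by the power series `A` in the parameter `qq`. -/
def Rep (f : ℍ → ℂ) (A : PowerSeries ℤ) : Prop :=
  ∀ τ : ℍ, HasSum (fun n => ((PowerSeries.coeff n A : ℤ) : ℂ) * qq τ ^ n) (f τ)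

lemma hs_congr {f g : ℕ → ℂ} {a b : ℂ} (h : HasSum f a) (hfg : ∀ n, g n = f n) (hab : b = a) :
    HasSum g b := by
  rw [hab, funext hfg]; exact h

lemma Rep.add {f g : ℍ → ℂ} {A B : PowerSeries ℤ} (hf : Rep f A) (hg : Rep g B) :
    Rep (f + g) (A + B) := by
  intro τ
  simpa [add_mul] using (hf τ).add (hg τ)

lemma Rep.smul {f : ℍ → ℂ} {A : PowerSeries ℤ} (hf : Rep f A) (c : ℤ) :
    Rep ((c : ℂ) • f) (c • A) := by
  intro τ
  refine hs_congr ((hf τ).mul_left (c : ℂ)) (fun n => ?_) rfl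
  rw [map_zsmul, smul_eq_mul]
  push_cast
  ring

lemma Rep.mul {f g : ℍ → ℂ} {A B : PowerSeries ℤ} (hf : Rep f A) (hg : Rep g B) :
    Rep (f * g) (A * B) := by
  intro τ
  have h1 := (hf τ).summable.norm
  have h2 := (hg τ).summable.norm
  have h3 := (summable_norm_sum_mul_antidiagonal_of_summable_norm h1 h2).of_norm.hasSum
  rw [← tsum_mul_tsum_eq_tsum_sum_antidiagonal_of_summable_norm h1 h2, (hf τ).tsum_eq,
    (hg τ).tsum_eq] at h3
  refine hs_congr h3 (fun n => ?_) rfl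
  rw [PowerSeries.coeff_mul]
  push_cast
  rw [Finset.sum_mul]
  refine Finset.sum_congr rfl fun x hx => ?_
  rw [← Finset.HasAntidiagonal.mem_antidiagonal.mp hx, pow_add]
  ring

lemma Rep.one : Rep 1 1 := by
  intro τ
  have := hasSum_ite_eq (0 : ℕ) (1 : ℂ)
  refine hs_congr this (fun n => ?_) rfl
  rw [PowerSeries.coeff_one]
  split_ifs with h <;> simp [h]

lemma Rep.pow {f : ℍ → ℂ} {A : PowerSeries ℤ} (hf : Rep f A) (n : ℕ) : Rep (f ^ n) (A ^ n) := by
  induction n with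
  | zero => simpa using Rep.one
  | succ n ih => rw [pow_succ, pow_succ]; exact ih.mul hf

lemma Rep.X_pow (n : ℕ) : Rep (fun τ => qq τ ^ n) (PowerSeries.X ^ n) := by
  intro τ
  have := hasSum_ite_eq n (qq τ ^ n)
  refine hs_congr this (fun m => ?_) rfl
  rw [PowerSeries.coeff_X_pow]
  split_ifs with h <;> simp [h]

lemma Rep.bdd {f : ℍ → ℂ} {A : PowerSeries ℤ} (hf : Rep f A) : IsBoundedAtImInfty f :=
  isBoundedAtImInfty_of_hasSum_qExpansion (h := 144)
    (c := fun n => ((PowerSeries.coeff n A : ℤ) : ℂ)) (by norm_num) hf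

/-- Removing leading zeros. -/
lemma Rep.shift {f : ℍ → ℂ} {A : PowerSeries ℤ} {N : ℕ} (hf : Rep f (PowerSeries.X ^ N * A)) :
    Rep (fun τ => f τ / qq τ ^ N) A := by
  intro τ
  have h0 := pow_ne_zero N (qq_ne τ)
  have h1 := hf τ
  have h2 : HasSum (fun n => ((PowerSeries.coeff n A : ℤ) : ℂ) * qq τ ^ (n + N)) (f τ) := by
    rw [← (add_left_injective N).hasSum_iff] at h1
    · refine hs_congr h1 (fun n => ?_) rfl
      simp only [Function.comp]
      rw [mul_comm (PowerSeries.X ^ N), PowerSeries.coeff_mul_X_pow]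
    · intro n hn
      have : n < N := by
        by_contra hh
        exact hn ⟨n - N, by simp; omega⟩
      rw [PowerSeries.coeff_X_pow_mul', if_neg (by omega)]
      simp
  have h3 := h2.div_const (qq τ ^ N)
  refine hs_congr h3 (fun n => ?_) rfl
  rw [pow_add]; field_simp

lemma Rep.gr {f : ℍ → ℂ} {A : PowerSeries ℤ} {N : ℕ} (hf : Rep f (PowerSeries.X ^ N * A)) :
    Gr f (-N) := by
  have h1 := Gr_zero_iff.mpr hf.shift.bdd
  have h2 := h1.mul (qq_gr N)
  convert h2 using 1
  · ext τ
    have h0 := pow_ne_zero N (qq_ne τ)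
    simp only [Pi.mul_apply, zpow_natCast]
    field_simp
  · simp

lemma zero_analytic : AnalyticAt ℂ (cuspFunction 144 (0 : ℍ → ℂ)) 0 := by
  have : cuspFunction 144 (0 : ℍ → ℂ) = 0 := by
    simpa [cuspFunction, Function.Periodic.cuspFunction]
      using! (tendsto_const_nhds.mono_left nhdsWithin_le_nhds).limUnder_eq
  rw [this]
  exact analyticAt_const

lemma qexp_unique {h : ℝ} (f : ℍ → ℂ) {c : ℕ → ℂ} (hh : 0 < h)
    (ha : AnalyticAt ℂ (cuspFunction h f) 0)
    (hf : ∀ τ : ℍ, HasSum (fun m => c m • Function.Periodic.qParam h τ ^ m) (f τ)) (m : ℕ) :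
    c m = (qExpansion h f).coeff m :=
  @qExpansion_coeff_unique (ℍ → ℂ) ⟨id, Function.injective_id⟩ h f c hh ha hf m

lemma Rep.unique {f : ℍ → ℂ} {A : PowerSeries ℤ} (hf : Rep f A)
    (ha : AnalyticAt ℂ (cuspFunction 144 f) 0) (n : ℕ) :
    ((PowerSeries.coeff n A : ℤ) : ℂ) = (qExpansion 144 f).coeff n :=
  qexp_unique (h := 144) f (c := fun n => ((PowerSeries.coeff n A : ℤ) : ℂ))
    (by norm_num) ha hf n

lemma Rep.eq_zero {A : PowerSeries ℤ} (hf : Rep 0 A) : A = 0 := by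
  ext n
  have := hf.unique zero_analytic n
  rw [qExpansion_zero, map_zero] at this
  rw [map_zero]
  exact_mod_cast this

lemma root_sum {Q : ℕ} [hp : Fact Q.Prime] {ζ : ℂ} (hζ : IsPrimitiveRoot ζ Q) (n : ℕ) :
    ∑ j : ZMod Q, (ζ ^ j.val) ^ n = if Q ∣ n then (Q : ℂ) else 0 := by
  have h0 : ∑ j : ZMod Q, (ζ ^ j.val) ^ n = ∑ i ∈ Finset.range Q, (ζ ^ n) ^ i := by
    obtain ⟨q, rfl⟩ : ∃ q, Q = q + 1 := ⟨Q - 1, by have := hp.out.pos; omega⟩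
    rw [← Fin.sum_univ_eq_sum_range (fun i => (ζ ^ n) ^ i)]
    refine Finset.sum_congr rfl fun i _ => ?_
    rw [← pow_mul, ← pow_mul, mul_comm]
    rfl
  rw [h0]
  split_ifs with h
  · rw [(hζ.pow_eq_one_iff_dvd n).mpr h]; simp
  · have h1 : ζ ^ n ≠ 1 := fun h1 => h ((hζ.pow_eq_one_iff_dvd n).mp h1)
    rw [geom_sum_eq h1, ← pow_mul, mul_comm, pow_mul, hζ.pow_eq_one]
    simp

/-- Coefficients of the Hecke operator. -/
noncomputable def serT (Q : ℕ) (c : ℤ) (A : PowerSeries ℤ) : PowerSeries ℤ :=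
  PowerSeries.mk (seqT Q c fun n => PowerSeries.coeff n A)

lemma Rep.hecke {Q : ℕ} [hp : Fact Q.Prime] {k : ℕ} {f : ℍ → ℂ} {A : PowerSeries ℤ}
    (hf : Rep f A) : Rep (heckeT Q (k + 1) f) (serT Q (eps Q * Q ^ k) A) := by
  have hQ : 0 < Q := hp.out.pos
  have hQ' : (0 : ℤ) < Q := by exact_mod_cast hQ
  have hQC : (Q : ℂ) ≠ 0 := by exact_mod_cast hQ.ne'
  intro τ
  have e1 : heckeT Q (k + 1) f τ = (eps Q : ℂ) * (f (gm !![(Q : ℤ), 0; 0, 1] • τ) * (Q : ℂ) ^ k)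
      + ∑ j : ZMod Q, f (gm !![1, 144 * (j.val : ℤ); 0, (Q : ℤ)] • τ) * (Q : ℂ)⁻¹ := by
    unfold heckeT
    rw [Fintype.sum_option]
    simp only [Pi.add_apply, Finset.sum_apply, Pi.smul_apply, smul_eq_mul, rep, cf]
    congr 1
    · rw [slash_gm_ut hQ' one_pos]
      simp
    · refine Finset.sum_congr rfl fun j _ => ?_
      rw [slash_gm_ut one_pos hQ']
      simp only [Int.cast_one, one_mul, Int.cast_natCast]
      congr 1
      rw [← zpow_add₀ hQC]
      rw [show ((k : ℤ) + 1 - 1 + -(k + 1)) = -1 by ring, _root_.zpow_neg_one]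
  set ζ : ℂ := Complex.exp (2 * Real.pi * Complex.I / Q) with hζ
  have hprim : IsPrimitiveRoot ζ Q := Complex.isPrimitiveRoot_exp Q hQ.ne'
  set q1 : ℂ := Complex.exp (2 * Real.pi * Complex.I * τ / (144 * Q)) with hq1
  have e2 : q1 ^ Q = qq τ := by
    rw [hq1, ← Complex.exp_nat_mul, qq, Function.Periodic.qParam]
    congr 1
    push_cast
    field_simp
  have e3 : qq (gm !![(Q : ℤ), 0; 0, 1] • τ) = qq τ ^ Q := by
    rw [qq, qq, Function.Periodic.qParam, Function.Periodic.qParam, coe_gm_ut_smul hQ' one_pos,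
      ← Complex.exp_nat_mul]
    congr 1
    push_cast
    field_simp
    ring
  have e4 : ∀ j : ZMod Q, qq (gm !![1, 144 * (j.val : ℤ); 0, (Q : ℤ)] • τ) = ζ ^ j.val * q1 := by
    intro j
    rw [qq, Function.Periodic.qParam, coe_gm_ut_smul one_pos hQ', hζ, hq1,
      ← Complex.exp_nat_mul, ← Complex.exp_add]
    congr 1
    generalize j.val = J
    push_cast
    field_simp
    ring
  have s1 : HasSum (fun n => ((eps Q * Q ^ k * seqV Q (fun n => PowerSeries.coeff n A) n : ℤ) : ℂ)
      * qq τ ^ n) ((eps Q : ℂ) * (f (gm !![(Q : ℤ), 0; 0, 1] • τ) * (Q : ℂ) ^ k)) := by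
    have h1 := hf (gm !![(Q : ℤ), 0; 0, 1] • τ)
    rw [e3] at h1
    have hinj : Function.Injective (fun n : ℕ => Q * n) := fun a b h =>
      Nat.eq_of_mul_eq_mul_left hQ h
    rw [← hinj.hasSum_iff]
    · have h2 := (h1.mul_right ((Q : ℂ) ^ k)).mul_left (eps Q : ℂ)
      refine hs_congr h2 (fun n => ?_) rfl
      simp only [Function.comp, seqV, dvd_mul_right, if_true, Nat.mul_div_cancel_left _ hQ, pow_mul]
      push_cast
      ring
    · intro n hn
      have : ¬ Q ∣ n := fun ⟨u, hu⟩ => hn ⟨u, hu.symm⟩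
      simp [seqV, this]
  have s2 : HasSum (fun n => ((seqU Q (fun n => PowerSeries.coeff n A) n : ℤ) : ℂ) * qq τ ^ n)
      (∑ j : ZMod Q, f (gm !![1, 144 * (j.val : ℤ); 0, (Q : ℤ)] • τ) * (Q : ℂ)⁻¹) := by
    have h1 := hasSum_sum (s := Finset.univ) (fun (j : ZMod Q) _ =>
      (hf (gm !![1, 144 * (j.val : ℤ); 0, (Q : ℤ)] • τ)).mul_right (Q : ℂ)⁻¹)
    have h2 : ∀ n, ∑ j : ZMod Q, ((PowerSeries.coeff n A : ℤ) : ℂ) *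
        qq (gm !![1, 144 * (j.val : ℤ); 0, (Q : ℤ)] • τ) ^ n * (Q : ℂ)⁻¹
        = if Q ∣ n then ((PowerSeries.coeff n A : ℤ) : ℂ) * q1 ^ n else 0 := by
      intro n
      have : ∀ j : ZMod Q, ((PowerSeries.coeff n A : ℤ) : ℂ) *
        qq (gm !![1, 144 * (j.val : ℤ); 0, (Q : ℤ)] • τ) ^ n * (Q : ℂ)⁻¹ =
        (((PowerSeries.coeff n A : ℤ) : ℂ) * q1 ^ n * (Q : ℂ)⁻¹) * (ζ ^ j.val) ^ n := by
        intro j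
        rw [e4, mul_pow]; ring
      rw [Finset.sum_congr rfl fun j _ => this j, ← Finset.mul_sum, root_sum hprim]
      split_ifs
      · field_simp
      · simp
    simp only [h2] at h1
    have hinj : Function.Injective (fun n : ℕ => Q * n) := fun a b h =>
      Nat.eq_of_mul_eq_mul_left hQ h
    rw [← hinj.hasSum_iff] at h1
    · refine hs_congr h1 (fun n => ?_) rfl
      simp only [Function.comp, seqU, dvd_mul_right, if_true, pow_mul, e2]
    · intro n hn
      have : ¬ Q ∣ n := fun ⟨u, hu⟩ => hn ⟨u, hu.symm⟩
      simp [this]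
  have h3 := s2.add s1
  rw [e1, add_comm]
  refine hs_congr h3 (fun n => ?_) rfl
  simp only [serT, PowerSeries.coeff_mk, seqT]
  push_cast
  ring

end P5
end B6

namespace B6
section P6
open UpperHalfPlane ModularForm Matrix Matrix.SpecialLinearGroup Filter Asymptotics
open scoped MatrixGroups Manifold ModularForm

/-- The principal congruence subgroup of level 144 as a subgroup of `GL(2, ℝ)`. -/
abbrev G144 : Subgroup (GL (Fin 2) ℝ) := (CongruenceSubgroup.Gamma 144).map (mapGL ℝ)

/-- Bundling. -/
def Cl.mf {k : ℤ} {f : ℍ → ℂ} (h : Cl k 0 f) : ModularForm G144 k where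
  toFun := f
  slash_action_eq' := by
    rintro _ ⟨γ, hγ, rfl⟩
    have h1 := CongruenceSubgroup.Gamma_mem.mp hγ
    have h01 : (144 : ℤ) ∣ γ 0 1 := by
      have := h1.2.1; exact_mod_cast (ZMod.intCast_zmod_eq_zero_iff_dvd _ 144).mp this
    have h10 : (144 : ℤ) ∣ γ 1 0 := by
      have := h1.2.2.1; exact_mod_cast (ZMod.intCast_zmod_eq_zero_iff_dvd _ 144).mp this
    have h11 : (144 : ℤ) ∣ γ 1 1 - 1 := by
      have := h1.2.2.2
      refine (ZMod.intCast_zmod_eq_zero_iff_dvd _ 144).mp ?_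
      push_cast; rw [this]; simp
    have h2 := h.inv γ h01 h10
    rw [eps_congr (y := 1) ((show (24 : ℤ) ∣ 144 by norm_num).trans h11)] at h2
    have : eps 1 = 1 := by decide
    rw [this] at h2
    rw [Int.cast_one, one_smul] at h2
    exact h2
  holo' := h.hol
  bdd_at_cusps' {c} hc := by
    rw [Subgroup.IsArithmetic.isCusp_iff_isCusp_SL2Z] at hc
    rw [OnePoint.isBoundedAt_iff_forall_SL2Z hc]
    intro γ _
    exact Gr_zero_iff.mp (h.gr γ)

lemma order_of_gr {k : ℤ} (g : ModularForm 𝒮ℒ k) (M : ℕ) (h : Gr g (-(144 * M))) :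
    (M : ℕ∞) ≤ (qExpansion 1 g).order := by
  have hper1 : Function.Periodic (g ∘ ofComplex) ((1 : ℝ) : ℂ) :=
    SlashInvariantFormClass.periodic_comp_ofComplex g one_mem_strictPeriods_SL
  have hq : ∀ τ : ℍ, Function.Periodic.qParam 1 τ = qq τ ^ 144 := by
    intro τ
    rw [qq, Function.Periodic.qParam, Function.Periodic.qParam, ← Complex.exp_nat_mul]
    congr 1
    push_cast
    field_simp
  have hq0 : ∀ τ : ℍ, Function.Periodic.qParam 1 τ ≠ 0 := fun τ => Function.Periodic.qParam_ne_zero _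
  set u : ℍ → ℂ := fun τ => g τ / Function.Periodic.qParam 1 τ ^ M with hu
  have hub : IsBoundedAtImInfty u := by
    rw [← Gr_zero_iff]
    have := h.mul (qq_gr (-(144 * M : ℕ)))
    convert this using 1
    · ext τ
      simp only [hu, Pi.mul_apply, hq, _root_.zpow_neg, zpow_natCast, pow_mul]
      rw [div_eq_mul_inv]
    · push_cast; ring
  have hup : Function.Periodic (u ∘ ofComplex) ((1 : ℝ) : ℂ) := by
    intro w
    have h1 := hper1 w
    simp only [Function.comp_apply, hu] at h1 ⊢
    rw [h1]
    by_cases hw : 0 < w.im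
    · rw [ofComplex_apply_of_im_pos hw, ofComplex_apply_of_im_pos (by simpa using hw)]
      have : Function.Periodic.qParam 1 (w + (1 : ℝ)) = Function.Periodic.qParam 1 w := by
          unfold Function.Periodic.qParam
          rw [Complex.exp_eq_exp_iff_exists_int]
          exact ⟨1, by push_cast; ring⟩
      congr 2
    · have hw' : w.im ≤ 0 := not_lt.mp hw
      rw [ofComplex_apply_of_im_nonpos hw', ofComplex_apply_of_im_nonpos (by simpa using hw')]
  have hud : MDiff u := by
    rw [UpperHalfPlane.mdifferentiable_iff]
    have h1 := UpperHalfPlane.mdifferentiable_iff.mp g.holo'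
    have h2 : DifferentiableOn ℂ (fun z => Function.Periodic.qParam 1 z ^ M) {z : ℂ | 0 < z.im} :=
      ((Function.Periodic.differentiable_qParam (h := 1)).pow M).differentiableOn
    refine (h1.div h2 fun z hz => pow_ne_zero _ (Function.Periodic.qParam_ne_zero _)).congr
      fun z hz => ?_
    have hz' : (ofComplex z : ℂ) = z := by rw [ofComplex_apply_of_im_pos hz]
    simp only [Function.comp, hu, hz', Pi.div_apply]
    rfl
  have hs := hasSum_qExpansion (h := 1) one_pos hup hud hub
  have ha : AnalyticAt ℂ (cuspFunction 1 g) 0 :=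
    ModularFormClass.analyticAt_cuspFunction_zero g one_pos one_mem_strictPeriods_SL
  have hg : ∀ τ : ℍ, HasSum (fun m => (PowerSeries.coeff m (PowerSeries.X ^ M * qExpansion 1 u)) •
      Function.Periodic.qParam 1 τ ^ m) (g τ) := by
    intro τ
    have h1 := (hs τ).mul_right (Function.Periodic.qParam 1 τ ^ M)
    rw [← (add_left_injective M).hasSum_iff]
    · refine hs_congr h1 (fun n => ?_) ?_
      · simp only [Function.comp, smul_eq_mul, mul_comm (PowerSeries.X ^ M),
          PowerSeries.coeff_mul_X_pow, pow_add, mul_assoc]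
      · simp only [hu]
        have := pow_ne_zero M (hq0 τ)
        field_simp
    · intro n hn
      have : n < M := by
        by_contra hh
        exact hn ⟨n - M, by simp; omega⟩
      rw [PowerSeries.coeff_X_pow_mul', if_neg (by omega)]
      simp
  apply PowerSeries.le_order
  intro i hi
  rw [← qexp_unique (h := 1) g one_pos ha hg i, PowerSeries.coeff_X_pow_mul', if_neg]
  have : i < M := by exact_mod_cast hi
  omega

lemma Cl.gr_quot {k : ℤ} {f : ℍ → ℂ} (h : Cl k 0 f) (q : 𝒮ℒ ⧸ (G144.subgroupOf 𝒮ℒ)) :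
    Gr (SlashInvariantForm.quotientFunc h.mf q) 0 := by
  induction q using Quotient.inductionOn with
  | h r =>
    rw [SlashInvariantForm.quotientFunc_mk]
    obtain ⟨γ, hγ⟩ := r.2
    have : (h.mf : ℍ → ℂ) ∣[k] (r.val)⁻¹ = f ∣[k] γ⁻¹ := by
      rw [SL_slash, ← hγ]
      simp
      rfl
    rw [this]
    exact h.gr _

/-- Sturm-type bound for the class. -/
lemma sturm_cl (k : ℤ) : ∃ N : ℕ, ∀ f A, Cl k 0 f → Rep f A →
    (∀ n < N, PowerSeries.coeff n A = 0) → A = 0 := by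
  classical
  set M := (k * Nat.card (𝒮ℒ ⧸ (G144.subgroupOf 𝒮ℒ))).toNat / 12 + 1 with hM
  refine ⟨144 * M, fun f A hf hr hA => ?_⟩
  obtain ⟨B, rfl⟩ : PowerSeries.X ^ (144 * M) ∣ A := PowerSeries.X_pow_dvd_iff.mpr hA
  have h1 := hr.gr
  have hz : ModularForm.norm 𝒮ℒ hf.mf = 0 := by
    apply sturm_bound_levelOne
    refine lt_of_lt_of_le ?_ (order_of_gr _ M ?_)
    · rw [hM]; exact_mod_cast Nat.lt_succ_self _
    · let : Fintype (𝒮ℒ ⧸ (G144.subgroupOf 𝒮ℒ)) := Fintype.ofFinite _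
      rw [ModularForm.coe_norm]
      have h2 : Gr (SlashInvariantForm.quotientFunc hf.mf (⟦1⟧ : 𝒮ℒ ⧸ (G144.subgroupOf 𝒮ℒ)))
          (-(144 * M)) := by
        rw [SlashInvariantForm.quotientFunc_mk]
        have : (hf.mf : ℍ → ℂ) ∣[k] ((1 : 𝒮ℒ).val)⁻¹ = f := by
          simp
          rfl
        rw [this]
        exact_mod_cast h1
      have h3 : ∀ s : Finset (𝒮ℒ ⧸ (G144.subgroupOf 𝒮ℒ)),
          Gr (∏ q ∈ s, SlashInvariantForm.quotientFunc hf.mf q) 0 := by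
        intro s
        induction s using Finset.induction_on with
        | empty =>
          rw [Finset.prod_empty, Gr_zero_iff]
          exact Filter.const_boundedAtFilter _ (1 : ℂ)
        | insert a s ha ih =>
          rw [Finset.prod_insert ha]
          simpa using (hf.gr_quot a).mul ih
      have h4 := h2.mul (h3 (Finset.univ.erase ⟦1⟧))
      have h5 := Finset.mul_prod_erase Finset.univ
        (fun q => SlashInvariantForm.quotientFunc hf.mf q)
        (Finset.mem_univ (⟦1⟧ : 𝒮ℒ ⧸ (G144.subgroupOf 𝒮ℒ)))
      rw [add_zero] at h4
      exact h5 ▸ h4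
  rw [ModularForm.norm_eq_zero_iff] at hz
  have hz' : f = 0 := hz
  subst hz'
  exact hr.eq_zero

lemma Cl.add {k : ℤ} {e : ℝ} {f g : ℍ → ℂ} (hf : Cl k e f) (hg : Cl k e g) : Cl k e (f + g) where
  hol := hf.hol.add hg.hol
  inv γ h h' := by rw [SlashAction.add_slash, hf.inv γ h h', hg.inv γ h h', smul_add]
  gr γ := by rw [SlashAction.add_slash]; exact (hf.gr γ).add (hg.gr γ)

lemma Cl.smul {k : ℤ} {e : ℝ} {f : ℍ → ℂ} (hf : Cl k e f) (c : ℂ) : Cl k e (c • f) where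
  hol := hf.hol.const_smul c
  inv γ h h' := by rw [slash_smul_SL, hf.inv γ h h', smul_comm]
  gr γ := by rw [slash_smul_SL]; exact (hf.gr γ).smul c

lemma Cl.zero (k : ℤ) (e : ℝ) : Cl k e 0 where
  hol := mdifferentiable_const
  inv γ h h' := by rw [SlashAction.zero_slash, smul_zero]
  gr γ := by rw [SlashAction.zero_slash]; exact isBigO_zero _ _

lemma Rep.zero : Rep 0 0 := by intro τ; simp

/-- The module of integral expansions. -/
noncomputable def Lam (k : ℤ) : Submodule ℤ (PowerSeries ℤ) where
  carrier := {A | ∃ f, Cl k 0 f ∧ Rep f A}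
  add_mem' := by
    rintro A B ⟨f, hf, hA⟩ ⟨g, hg, hB⟩
    exact ⟨f + g, hf.add hg, hA.add hB⟩
  zero_mem' := ⟨0, Cl.zero k 0, Rep.zero⟩
  smul_mem' := by
    rintro c A ⟨f, hf, hA⟩
    exact ⟨(c : ℂ) • f, hf.smul _, hA.smul c⟩

lemma Lam_fg (k : ℤ) : Module.Finite ℤ (Lam k) := by
  obtain ⟨N, hN⟩ := sturm_cl k
  let φ : PowerSeries ℤ →ₗ[ℤ] (Fin N → ℤ) := LinearMap.pi fun i => PowerSeries.coeff (i : ℕ)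
  have hinj : Function.Injective (φ.comp (Lam k).subtype) := by
    rw [← LinearMap.ker_eq_bot, LinearMap.ker_eq_bot']
    rintro ⟨A, f, hf, hA⟩ h
    apply Subtype.ext
    refine hN f A hf hA fun n hn => ?_
    exact congrFun h ⟨n, hn⟩
  exact Module.Finite.of_injective _ hinj

/-- Reductions modulo `m` of the integral expansions. -/
def Vset (k : ℤ) (m : ℕ) : Set (ℕ → ZMod m) :=
  {v | ∃ A ∈ Lam k, v = fun n => ((PowerSeries.coeff n A : ℤ) : ZMod m)}

lemma Vset_finite (k : ℤ) (m : ℕ) [NeZero m] : (Vset k m).Finite := by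
  have := Lam_fg k
  let ψ : Lam k →ₗ[ℤ] (ℕ → ZMod m) :=
    (LinearMap.pi fun n => ((Int.castAddHom (ZMod m)).toIntLinearMap).comp
      (PowerSeries.coeff n)).comp (Lam k).subtype
  have h1 : Vset k m = (LinearMap.range ψ : Set (ℕ → ZMod m)) := by
    ext v
    constructor
    · rintro ⟨A, hA, rfl⟩
      exact ⟨⟨A, hA⟩, rfl⟩
    · rintro ⟨⟨A, hA⟩, rfl⟩
      exact ⟨A, hA, rfl⟩
  rw [h1]
  have : Module.IsTorsion ℤ (LinearMap.range ψ) := by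
    intro x
    refine ⟨⟨(m : ℤ), ?_⟩, ?_⟩
    · rw [mem_nonZeroDivisors_iff_ne_zero]; exact_mod_cast NeZero.ne m
    · apply Subtype.ext
      funext n
      change (m : ℤ) • (x.1 n) = 0
      simp
  have := Module.finite_of_fg_torsion (LinearMap.range ψ) this
  exact Set.toFinite _

end P6
end B6

namespace B6
section P7
open UpperHalfPlane ModularForm Matrix Matrix.SpecialLinearGroup Filter Asymptotics
open scoped MatrixGroups Manifold ModularForm

lemma prod_bound {x : ℂ} (hx : ‖x‖ < 1) (k n : ℕ) :
    ‖∏ i ∈ Finset.range n, (1 - x ^ (k + i + 1))‖ ≤ Real.exp (1 - ‖x‖)⁻¹ := by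
  have h0 := norm_nonneg x
  calc ‖∏ i ∈ Finset.range n, (1 - x ^ (k + i + 1))‖
      = ∏ i ∈ Finset.range n, ‖1 - x ^ (k + i + 1)‖ := norm_prod _ _
    _ ≤ ∏ i ∈ Finset.range n, Real.exp (‖x‖ ^ i) := by
        refine Finset.prod_le_prod (fun i _ => norm_nonneg _) fun i _ => ?_
        calc ‖1 - x ^ (k + i + 1)‖ ≤ ‖(1 : ℂ)‖ + ‖x ^ (k + i + 1)‖ := norm_sub_le _ _
          _ ≤ ‖x‖ ^ i + 1 := by
            rw [norm_one, norm_pow, add_comm]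
            gcongr ?_ + 1
            exact pow_le_pow_of_le_one h0 hx.le (by omega)
          _ ≤ _ := Real.add_one_le_exp _
    _ = Real.exp (∑ i ∈ Finset.range n, ‖x‖ ^ i) := (Real.exp_sum _ _).symm
    _ ≤ _ := by
        refine Real.exp_le_exp.mpr ?_
        rw [← tsum_geometric_of_lt_one h0 hx]
        exact (summable_geometric_of_lt_one h0 hx).sum_le_tsum _ (fun i _ => by positivity)

lemma pent_coeff_norm (n : ℕ) :
    ‖((PowerSeries.coeff n (PowerSeries.pentagonalSeries ℤ) : ℤ) : ℂ)‖ ≤ 1 := by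
  by_cases h : n ∈ Set.range pentagonal
  · obtain ⟨k, rfl⟩ := h
    rw [PowerSeries.coeff_pentagonalSeries_pentagonal]
    rcases Int.units_eq_one_or (Int.negOnePow k) with h | h <;> simp [h]
  · rw [PowerSeries.coeff_pentagonalSeries_eq_zero ℤ h]; simp

lemma euler_hasSum {x : ℂ} (hx : ‖x‖ < 1) :
    HasSum (fun n => ((PowerSeries.coeff n (PowerSeries.pentagonalSeries ℤ) : ℤ) : ℂ) * x ^ n)
      (∏' n : ℕ, (1 - x ^ (n + 1))) := by
  have h0 := norm_nonneg x
  have hgeo := summable_geometric_of_lt_one h0 hx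
  have hs : Summable
      (fun n => ((PowerSeries.coeff n (PowerSeries.pentagonalSeries ℤ) : ℤ) : ℂ) * x ^ n) := by
    refine Summable.of_norm_bounded hgeo fun n => ?_
    rw [norm_mul, norm_pow]
    exact mul_le_of_le_one_left (by positivity) (pent_coeff_norm n)
  have h1 := hs.hasSum
  rw [← pentagonal_injective.hasSum_iff fun n hn => by
    simp [PowerSeries.coeff_pentagonalSeries_eq_zero ℤ hn]] at h1
  rw [← neg_injective.hasSum_iff (fun x hx ↦ by absurd hx; use -x; simp)] at h1
  have h2 := h1.nat_add_neg_add_one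
  have h3 : HasSum (fun k : ℕ ↦ (-1) ^ k * (x ^ pentagonal (-k) - x ^ pentagonal (k + 1)))
      (∑' n, ((PowerSeries.coeff n (PowerSeries.pentagonalSeries ℤ) : ℤ) : ℂ) * x ^ n) := by
    refine hs_congr h2 (fun k => ?_) rfl
    simp only [Function.comp_apply, neg_neg, PowerSeries.coeff_pentagonalSeries_pentagonal,
      Int.negOnePow_add]
    simp
    ring
  have hb : ∀ k n : ℕ, ‖x ^ ((k + 1) * n) * ∏ i ∈ Finset.range (n + 1), (1 - x ^ (k + i + 1))‖
      ≤ ‖x‖ ^ n * Real.exp (1 - ‖x‖)⁻¹ := by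
    intro k n
    rw [norm_mul, norm_pow]
    refine mul_le_mul ?_ (prod_bound hx k (n + 1)) (norm_nonneg _) (by positivity)
    exact pow_le_pow_of_le_one h0 hx.le (by nlinarith)
  have hkey := Pentagonal.tprod_one_sub_pow (x := x)
    (tendsto_pow_atTop_nhds_zero_of_norm_lt_one hx)
    (fun k => Summable.of_norm_bounded (hgeo.mul_right _) (hb k))
    (fun k => by
      have := (summable_nat_add_iff (k + 1)).mpr hgeo
      have h4 : Summable fun n => ‖-x ^ (n + k + 1)‖ := by simpa [add_assoc] using this
      simpa [sub_eq_add_neg] using multipliable_one_add_of_summable h4)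
    h3.summable ?_
  · rw [hkey, h3.tsum_eq]
    exact hs.hasSum
  · have hz : Tendsto (fun k : ℕ => ‖x‖ ^ k * ∑' n : ℕ, ‖x‖ ^ n * Real.exp (1 - ‖x‖)⁻¹) atTop
        (nhds (0 * ∑' n : ℕ, ‖x‖ ^ n * Real.exp (1 - ‖x‖)⁻¹)) :=
      (tendsto_pow_atTop_nhds_zero_of_lt_one h0 hx).mul_const _
    rw [zero_mul] at hz
    refine squeeze_zero_norm (fun k => ?_) hz
    rw [norm_mul, norm_mul, norm_pow, norm_pow, norm_neg, norm_one, one_pow, one_mul]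
    refine mul_le_mul ?_ ?_ (norm_nonneg _) (by positivity)
    · refine pow_le_pow_of_le_one h0 hx.le ?_
      rw [Nat.le_div_iff_mul_le (by norm_num)]
      nlinarith
    · exact tsum_of_norm_bounded (hgeo.mul_right _).hasSum (hb k)

/-- Euler's product as a function of the parameter. -/
noncomputable def Pfun (z : ℂ) : ℂ := ∏' n, (1 - eta_q n z)

lemma qParam_qq (τ : ℍ) : Function.Periodic.qParam 1 (τ : ℂ) = qq τ ^ 144 := by
  rw [qq, Function.Periodic.qParam, Function.Periodic.qParam, ← Complex.exp_nat_mul]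
  congr 1
  push_cast
  ring

noncomputable abbrev E1 : PowerSeries ℤ := PowerSeries.pentagonalSeries ℤ

noncomputable def EE : PowerSeries ℤ := PowerSeries.expand 144 (by norm_num) E1

lemma hs_expand {A : PowerSeries ℤ} {N : ℕ} (hN : N ≠ 0) {x s : ℂ}
    (h : HasSum (fun n => ((PowerSeries.coeff n A : ℤ) : ℂ) * (x ^ N) ^ n) s) :
    HasSum (fun n => ((PowerSeries.coeff n (PowerSeries.expand N hN A) : ℤ) : ℂ) * x ^ n) s := by
  rw [← (mul_right_injective₀ hN).hasSum_iff]
  · refine hs_congr h (fun n => ?_) rfl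
    simp only [Function.comp]
    rw [PowerSeries.coeff_expand_mul, pow_mul]
  · intro n hn
    rw [PowerSeries.coeff_expand, if_neg]
    · simp
    · rintro ⟨k, rfl⟩; exact hn ⟨k, rfl⟩

lemma rep_P : Rep (fun τ => Pfun τ) EE := by
  intro τ
  refine hs_expand (by norm_num) ?_
  have h : ‖qq τ ^ 144‖ < 1 := by
    rw [norm_pow]; exact pow_lt_one₀ (norm_nonneg _) (qq_lt τ) (by norm_num)
  have := euler_hasSum h
  rw [← qParam_qq] at this ⊢
  exact this

end P7
end B6

namespace B6
section P8
open UpperHalfPlane ModularForm Matrix Matrix.SpecialLinearGroup Filter Asymptotics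
open scoped MatrixGroups Manifold ModularForm

lemma Pfun_ne (τ : ℍ) : Pfun τ ≠ 0 := eta_tprod_ne_zero τ.2

lemma disc_eq (τ : ℍ) : discriminant τ = qq τ ^ 144 * Pfun τ ^ 24 := by
  rw [discriminant, eta, mul_pow, ← qParam_qq]
  congr 1
  rw [Function.Periodic.qParam, Function.Periodic.qParam, ← Complex.exp_nat_mul]
  congr 1
  push_cast
  ring

lemma Pinv_mdiff : MDiff (fun τ : ℍ => (Pfun τ)⁻¹) := by
  rw [UpperHalfPlane.mdifferentiable_iff]
  have : DifferentiableOn ℂ (fun z => (Pfun z)⁻¹) {z | 0 < z.im} := fun z hz =>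
    ((differentiableAt_eta_tprod hz).differentiableWithinAt).inv (eta_tprod_ne_zero hz)
  refine this.congr fun z hz => ?_
  simp [Function.comp, ofComplex_apply_of_im_pos hz]

lemma Pinv_per : Per (fun τ : ℍ => (Pfun τ)⁻¹) := by
  intro τ
  have : ∀ τ : ℍ, Pfun τ = ∏' n : ℕ, (1 - (qq τ ^ 144) ^ (n + 1)) := fun τ => by
    rw [← qParam_qq]; rfl
  simp only [this, qq_per τ]

lemma Pinv_bdd : IsBoundedAtImInfty (fun τ : ℍ => (Pfun τ)⁻¹) := by
  obtain ⟨c, hc⟩ := exp_isBigO_discriminant.bound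
  refine IsBigO.of_bound (max c 1) ?_
  filter_upwards [hc] with τ hτ
  rw [disc_eq, norm_mul, norm_pow, norm_qq, ← Real.exp_nat_mul,
    Real.norm_of_nonneg (Real.exp_pos _).le] at hτ
  have e1 : ((144 : ℕ) : ℝ) * -(2 * Real.pi / 144 * τ.im) = -2 * Real.pi * τ.im := by
    push_cast; ring
  rw [e1] at hτ
  have hp := Real.exp_pos (-2 * Real.pi * τ.im)
  have h1 : 1 ≤ c * ‖Pfun τ‖ ^ 24 := by
    rw [norm_pow] at hτ
    by_contra h
    push Not at h
    nlinarith
  have hP : 0 < ‖Pfun τ‖ := norm_pos_iff.mpr (Pfun_ne τ)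
  simp only [norm_inv, Pi.one_apply, norm_one, mul_one]
  by_cases hle : 1 ≤ ‖Pfun τ‖
  · exact (inv_le_one_of_one_le₀ hle).trans (le_max_right _ _)
  · push Not at hle
    refine le_trans ?_ (le_max_left _ _)
    have h2 : ‖Pfun τ‖ ^ 24 ≤ ‖Pfun τ‖ := by
      simpa using pow_le_pow_of_le_one hP.le hle.le (show 1 ≤ 24 by norm_num)
    have hc0 : 0 < c := by
      by_contra h
      push Not at h
      have : c * ‖Pfun τ‖ ^ 24 ≤ 0 := mul_nonpos_of_nonpos_of_nonneg h (by positivity)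
      linarith
    rw [inv_le_iff_one_le_mul₀ hP]
    exact h1.trans (mul_le_mul_of_nonneg_left h2 hc0.le)

lemma EE_const : PowerSeries.constantCoeff EE = 1 := by
  rw [EE, PowerSeries.constantCoeff_expand, ← PowerSeries.coeff_zero_eq_constantCoeff_apply]
  have := PowerSeries.coeff_pentagonalSeries_pentagonal ℤ 0
  simpa [pentagonal] using this

noncomputable def EI : PowerSeries ℤ := PowerSeries.invOfUnit EE 1

lemma EE_EI : EE * EI = 1 := PowerSeries.mul_invOfUnit _ _ (by rw [EE_const]; rfl)

lemma one_analytic : AnalyticAt ℂ (cuspFunction 144 (1 : ℍ → ℂ)) 0 :=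
  analyticAt_cuspFunction_zero (by norm_num) (fun _ => rfl) mdifferentiable_const
    (const_boundedAtFilter _ 1)

lemma rep_Pinv : Rep (fun τ => (Pfun τ)⁻¹) EI := by
  set g : ℍ → ℂ := fun τ => (Pfun τ)⁻¹ with hg
  have hs := hasSum_qExpansion (h := 144) (by norm_num) Pinv_per.periodic Pinv_mdiff Pinv_bdd
  set C := qExpansion 144 g with hC
  have h1 : C * PowerSeries.map (Int.castRingHom ℂ) EE = 1 := by
    ext n
    have := qexp_unique (h := 144) (1 : ℍ → ℂ)
      (c := fun n => PowerSeries.coeff n (C * PowerSeries.map (Int.castRingHom ℂ) EE))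
      (by norm_num) one_analytic (fun τ => ?_) n
    · have h1 := qexp_unique (h := 144) (1 : ℍ → ℂ)
        (c := fun n => PowerSeries.coeff n 1) (by norm_num) one_analytic (fun τ => by
          have := Rep.one τ
          refine hs_congr this (fun n => ?_) rfl
          rw [PowerSeries.coeff_one, PowerSeries.coeff_one]
          split_ifs <;> simp [qq]) n
      exact this.trans h1.symm
    · have h2 := (hs τ).summable.norm
      have h3 := (rep_P τ).summable.norm
      have h4 := (summable_norm_sum_mul_antidiagonal_of_summable_norm h2 h3).of_norm.hasSum
      rw [← tsum_mul_tsum_eq_tsum_sum_antidiagonal_of_summable_norm h2 h3, (hs τ).tsum_eq,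
        (rep_P τ).tsum_eq] at h4
      refine hs_congr h4 (fun n => ?_) ?_
      · rw [PowerSeries.coeff_mul, smul_eq_mul, Finset.sum_mul]
        refine Finset.sum_congr rfl fun x hx => ?_
        rw [← Finset.HasAntidiagonal.mem_antidiagonal.mp hx, pow_add, PowerSeries.coeff_map,
          smul_eq_mul, qq]
        simp only [eq_intCast]
        ring
      · simp only [Pi.one_apply]
        exact (inv_mul_cancel₀ (Pfun_ne τ)).symm
  have h2 : C = PowerSeries.map (Int.castRingHom ℂ) EI := by
    have h3 : PowerSeries.map (Int.castRingHom ℂ) EE * PowerSeries.map (Int.castRingHom ℂ) EI = 1 := by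
      rw [← map_mul, EE_EI, map_one]
    calc C = C * (PowerSeries.map (Int.castRingHom ℂ) EE
          * PowerSeries.map (Int.castRingHom ℂ) EI) := by rw [h3, mul_one]
      _ = _ := by rw [← mul_assoc, h1, one_mul]
  intro τ
  refine hs_congr (hs τ) (fun n => ?_) rfl
  rw [h2, PowerSeries.coeff_map]
  simp [qq]

lemma rep_disc : Rep discriminant (PowerSeries.X ^ 144 * EE ^ 24) := by
  have := (Rep.X_pow 144).mul (rep_P.pow 24)
  convert this using 1
  ext τ
  simp [disc_eq]

open PowerSeries PowerSeries.WithPiTopology Nat.Partition in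
lemma restricted_mul :
    (PowerSeries.mk fun n => (bReg 6 n : ℤ)) * E1
      = PowerSeries.expand 6 (by norm_num) E1 := by
  let _ : TopologicalSpace ℤ := ⊥
  have _ : DiscreteTopology ℤ := ⟨rfl⟩
  have key : (∏' i, if ¬ 6 ∣ i + 1 then ∑' j, (X : PowerSeries ℤ) ^ ((i + 1) * j) else 1)
      * ∏' i, (1 - X ^ (i + 1)) =
      ∏' i, (1 - (X : PowerSeries ℤ) ^ ((i + 1) * 6)) := by
    rw [← (multipliable_powerSeriesMk_card_restricted ℤ (¬ 6 ∣ ·)).tprod_mul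
      (multipliable_one_sub_X_pow _)]
    simp_rw [ite_not, ite_mul, pow_mul]
    conv in fun b ↦ _ =>
      ext b
      rw [tsum_pow_mul_one_sub_of_constantCoeff_eq_zero (by simp)]
    refine tprod_eq_tprod_of_ne_one_bij (fun i ↦ (i.val + 1) * 6 - 1) ?_ ?_ ?_
    · intro a b h
      exact SetCoe.ext (by simp at h; omega)
    · suffices ∀ (i : ℕ), 6 ∣ i + 1 → ∃ j ≠ 0, j * 6 - 1 = i by simpa
      intro i hi
      obtain ⟨j, hj⟩ := dvd_def.mp hi
      exact ⟨j, by omega, by omega⟩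
    · intro i
      have : ((i : ℕ) + 1) * 6 - 1 + 1 = ((i : ℕ) + 1) * 6 := by omega
      simp [this, pow_mul]
  have h2 : HasProd (fun i => 1 - (X : PowerSeries ℤ) ^ ((i + 1) * 6))
      (PowerSeries.expand 6 (by norm_num) E1) := by
    have hc : Continuous (PowerSeries.expand 6 (by norm_num) : PowerSeries ℤ →ₐ[ℤ] PowerSeries ℤ) := by
      rw [continuous_iff_continuousAt]
      intro A
      rw [ContinuousAt, tendsto_iff_coeff_tendsto]
      intro n
      simp only [coeff_expand]
      split_ifs
      · exact (continuous_coeff ℤ _).tendsto A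
      · exact tendsto_const_nhds
    have h3 := (hasProd_one_sub_X_pow ℤ).map
      (PowerSeries.expand 6 (by norm_num) : PowerSeries ℤ →ₐ[ℤ] PowerSeries ℤ) hc
    have e : (fun i => 1 - (X : PowerSeries ℤ) ^ ((i + 1) * 6)) =
      (PowerSeries.expand 6 (by norm_num) : PowerSeries ℤ →ₐ[ℤ] PowerSeries ℤ) ∘
        fun n => (1 - X ^ (n + 1)) := by
      funext i
      simp only [Function.comp, map_sub, map_one, map_pow, expand_X, ← pow_mul]
      rw [mul_comm]
    rw [e]; exact h3
  rw [h2.tprod_eq, tprod_one_sub_X_pow ℤ,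
    ← powerSeriesMk_card_restricted_eq_tprod ℤ (¬ 6 ∣ ·)] at key
  rw [← key]
  congr 1

/-- The eta quotient. -/
noncomputable def Ffun (τ : ℍ) : ℂ := eta (6 * τ) / eta τ

noncomputable def FS : PowerSeries ℤ :=
  PowerSeries.X ^ 30 * PowerSeries.expand 144 (by norm_num) (PowerSeries.mk fun n => (bReg 6 n : ℤ))

lemma FS_coeff (n : ℕ) : PowerSeries.coeff (144 * n + 30) FS = bReg 6 n := by
  rw [FS, add_comm, PowerSeries.coeff_X_pow_mul', if_pos (by omega)]
  simp only [add_tsub_cancel_left, PowerSeries.coeff_expand_mul, PowerSeries.coeff_mk]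

lemma FS_eq : FS = PowerSeries.X ^ 30 * (PowerSeries.expand 6 (by norm_num) EE * EI) := by
  have h : PowerSeries.expand 6 (by norm_num) EE = PowerSeries.expand 144 (by norm_num)
      (PowerSeries.mk fun n => (bReg 6 n : ℤ)) * EE := by
    rw [EE, ← map_mul, restricted_mul, ← PowerSeries.expand_mul, ← PowerSeries.expand_mul]
  rw [h, mul_assoc, EE_EI, mul_one, FS]

lemma rep_F : Rep Ffun FS := by
  rw [FS_eq]
  have h6 : Rep (fun τ => Pfun (6 * τ)) (PowerSeries.expand 6 (by norm_num) EE) := by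
    intro τ
    refine hs_expand (by norm_num) ?_
    refine hs_expand (by norm_num) ?_
    have h : ‖(qq τ ^ 6) ^ 144‖ < 1 := by
      rw [← pow_mul, norm_pow]; exact pow_lt_one₀ (norm_nonneg _) (qq_lt τ) (by norm_num)
    have := euler_hasSum h
    refine hs_congr this (fun n => rfl) ?_
    have h5 : Function.Periodic.qParam 1 (6 * τ : ℂ) = (qq τ ^ 6) ^ 144 := by
      rw [← pow_mul, mul_comm 6 144, pow_mul, ← qParam_qq, Function.Periodic.qParam,
        Function.Periodic.qParam, ← Complex.exp_nat_mul]
      congr 1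
      push_cast
      ring
    rw [← h5]
    rfl
  have := (Rep.X_pow 30).mul (h6.mul rep_Pinv)
  convert this using 1
  ext τ
  have h7 : Function.Periodic.qParam 24 (6 * τ : ℂ) = Function.Periodic.qParam 24 τ * qq τ ^ 30 := by
    rw [qq, Function.Periodic.qParam,
        Function.Periodic.qParam, Function.Periodic.qParam, ← Complex.exp_nat_mul, ← Complex.exp_add]
    congr 1
    push_cast
    ring
  have h8 : Function.Periodic.qParam 24 (τ : ℂ) ≠ 0 := Function.Periodic.qParam_ne_zero _
  have h9 := Pfun_ne τ
  simp only [Ffun, eta, h7, Pi.mul_apply]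
  change _ * Pfun (6 * τ) / (_ * Pfun τ) = _
  field_simp

end P8
end B6

namespace B6
section P9
open UpperHalfPlane ModularForm Matrix Matrix.SpecialLinearGroup Filter Asymptotics
open scoped MatrixGroups Manifold ModularForm

lemma coeff_mul_expand {R : Type*} [CommRing R] (B C : PowerSeries R) {m : ℕ} (hm : m ≠ 0) (n : ℕ) :
    PowerSeries.coeff (m * n) (B * PowerSeries.expand m hm C)
      = PowerSeries.coeff n (PowerSeries.mk (fun i => PowerSeries.coeff (m * i) B) * C) := by
  rw [PowerSeries.coeff_mul, PowerSeries.coeff_mul]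
  symm
  refine Finset.sum_of_injOn (fun p => (m * p.1, m * p.2)) ?_ ?_ ?_ ?_
  · rintro ⟨a, b⟩ _ ⟨c, d⟩ _ h
    simp only [Prod.mk.injEq] at h ⊢
    exact ⟨Nat.eq_of_mul_eq_mul_left (Nat.pos_of_ne_zero hm) h.1,
      Nat.eq_of_mul_eq_mul_left (Nat.pos_of_ne_zero hm) h.2⟩
  · rintro ⟨a, b⟩ h
    have h := Finset.HasAntidiagonal.mem_antidiagonal.mp h
    refine Finset.HasAntidiagonal.mem_antidiagonal.mpr ?_
    simp only at h ⊢
    rw [← h, mul_add]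
  · rintro ⟨a, b⟩ h h'
    have h := Finset.HasAntidiagonal.mem_antidiagonal.mp h
    simp only at h
    rw [PowerSeries.coeff_expand, if_neg, mul_zero]
    rintro ⟨j, rfl⟩
    refine h' ⟨(n - j, j), Finset.HasAntidiagonal.mem_antidiagonal.mpr ?_, ?_⟩
    · have : j ≤ n := by
        refine Nat.le_of_mul_le_mul_left ?_ (Nat.pos_of_ne_zero hm)
        rw [← h]; exact Nat.le_add_left _ _
      simp only; omega
    · simp only [Prod.mk.injEq, and_true]
      rw [Nat.mul_sub]; omega
  · rintro ⟨a, b⟩ _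
    simp only [PowerSeries.coeff_mk, PowerSeries.coeff_expand_mul]

lemma pow_eq_expand {m : ℕ} [hp : Fact m.Prime] (D : PowerSeries (ZMod m)) :
    D ^ m = PowerSeries.expand m hp.out.ne_zero D := by
  have h := MvPowerSeries.map_frobenius_expand (σ := Unit) (R := ZMod m) m hp.out.ne_zero (f := D)
  rw [ZMod.frobenius_zmod, MvPowerSeries.map_id] at h
  exact h.symm

lemma disc_slash (γ : SL(2, ℤ)) : discriminant ∣[(12 : ℤ)] γ = discriminant :=
  SlashInvariantForm.slash_action_generators_SL2Z discriminant_S_invariant discriminant_T_invariant γ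

lemma disc_pow_slash (n : ℕ) (γ : SL(2, ℤ)) :
    (discriminant ^ n) ∣[(12 * n : ℤ)] γ = discriminant ^ n := by
  induction n with
  | zero =>
    have : (12 * ((0 : ℕ) : ℤ)) = 0 := by simp
    rw [this, pow_zero, is_invariant_one]
  | succ n ih =>
    have : (12 * ((n + 1 : ℕ) : ℤ)) = 12 * n + 12 := by push_cast; ring
    rw [this, pow_succ, mul_slash_SL2, ih, disc_slash]

lemma disc_mdiff : MDiff discriminant := CuspForm.discriminant.holo'

lemma disc_gr : Gr discriminant (-144) := by
  have := rep_disc.gr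
  exact_mod_cast this

lemma disc_inv_gr : Gr (fun τ => (discriminant τ)⁻¹) 144 := by
  have h1 := (Gr_zero_iff.mpr Pinv_bdd).pow 24
  have h2 := (qq_gr (-144)).mul h1
  convert h2 using 1
  · ext τ
    simp [disc_eq, mul_comm]
  · norm_num

lemma disc_inv_mdiff : MDiff (fun τ => (discriminant τ)⁻¹) := by
  rw [UpperHalfPlane.mdifferentiable_iff]
  have := UpperHalfPlane.mdifferentiable_iff.mp disc_mdiff
  exact this.inv fun z hz => discriminant_ne_zero _

lemma MDiff_pow {f : ℍ → ℂ} (h : MDiff f) (n : ℕ) : MDiff (f ^ n) := by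
  rw [UpperHalfPlane.mdifferentiable_iff] at h ⊢
  exact h.pow n

lemma Cl.improve {k : ℤ} {r : ℝ} {f : ℍ → ℂ} (h : Cl k r f) (j : ℤ) (hj : r < j + 1) :
    Cl k j f where
  hol := h.hol
  inv := h.inv
  gr γ := (h.gr γ).improve (h.hol_slash γ) (h.per_slash γ) j hj

lemma Cl.mul_disc {k : ℤ} {e : ℝ} {f : ℍ → ℂ} (h : Cl k e f) (n : ℕ) :
    Cl (k + 12 * n) (e - 144 * n) (f * discriminant ^ n) where
  hol := h.hol.mul (MDiff_pow disc_mdiff n)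
  inv γ h1 h2 := by
    rw [mul_slash_SL2, disc_pow_slash, h.inv γ h1 h2, smul_mul_assoc]
  gr γ := by
    rw [mul_slash_SL2, disc_pow_slash]
    have := (h.gr γ).mul (disc_gr.pow n)
    convert this using 1
    ring

lemma Cl.div_disc {k : ℤ} {e : ℝ} {f : ℍ → ℂ} (h : Cl k e f) :
    Cl (k - 12) (e + 144) (f / discriminant) := by
  have e1 : ∀ g : ℍ → ℂ, g / discriminant = g * fun τ => (discriminant τ)⁻¹ := fun g => by
    ext τ; simp [div_eq_mul_inv]
  constructor
  · rw [e1]; exact h.hol.mul disc_inv_mdiff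
  · intro γ h1 h2
    rw [div_slash_SL2, disc_slash, h.inv γ h1 h2]
    ext τ; simp [mul_div_assoc]
  · intro γ
    rw [div_slash_SL2, disc_slash, e1]
    exact (h.gr γ).mul disc_inv_gr

noncomputable def DD : PowerSeries ℤ := PowerSeries.X ^ 144 * EE ^ 24

lemma phi_op {m : ℕ} [hp : Fact m.Prime] (hm : 5 ≤ m) {k : ℕ} {e : ℝ} {f : ℍ → ℂ}
    {A : PowerSeries ℤ} (h : Cl k e f) (hA : Rep f A) (he : e ≤ 144 * m) (j : ℤ)
    (hj : e / m < j + 1) :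
    ∃ (k' : ℕ) (f' : ℍ → ℂ) (A' : PowerSeries ℤ), 1 ≤ k' ∧ Cl k' j f' ∧ Rep f' A' ∧
      ∀ n, ((PowerSeries.coeff n A' : ℤ) : ZMod m) = ((PowerSeries.coeff (m * n) A : ℤ) : ZMod m) := by
  have hm0 : m ≠ 0 := hp.out.ne_zero
  have hmR : (0 : ℝ) < m := by exact_mod_cast hp.out.pos
  obtain ⟨w, hw⟩ : ∃ w : ℕ, k + 12 * m = w + 1 + 12 := ⟨k + 12 * m - 13, by omega⟩
  have hcop : IsCoprime (m : ℤ) 144 := by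
    have : Nat.Coprime m (2 ^ 4 * 3 ^ 2) :=
      Nat.Coprime.mul_right
        (((Nat.coprime_primes hp.out Nat.prime_two).mpr (by omega)).pow_right 4)
        (((Nat.coprime_primes hp.out Nat.prime_three).mpr (by omega)).pow_right 2)
    exact_mod_cast Nat.isCoprime_iff_coprime.mpr this
  have h1 := (h.mul_disc m).hecke hcop (by linarith)
  set g := heckeT m (k + 12 * m) (f * discriminant ^ m) with hg
  have h2 := h1.div_disc
  have hwk : ((k : ℤ) + 12 * m - 12) = ((w + 1 : ℕ) : ℤ) := by push_cast; omega
  rw [hwk] at h2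
  have h3 := h2.improve j (by
    have : (e - 144 * m) / m + 144 = e / m := by field_simp; ring
    rw [this]; exact hj)
  have r1 : Rep (f * discriminant ^ m) (A * DD ^ m) := hA.mul (rep_disc.pow m)
  have r2 := r1.hecke (Q := m) (k := w + 12)
  have hwk' : (((w + 12 : ℕ) : ℤ) + 1) = k + 12 * m := by push_cast; omega
  rw [hwk', ← hg] at r2
  set c : ℤ := eps m * m ^ (w + 12) with hc
  set S := serT m c (A * DD ^ m) with hS
  have hlow : ∀ i, i < 144 * m → PowerSeries.coeff i (A * DD ^ m) = 0 := by
    intro i hi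
    have : A * DD ^ m = PowerSeries.X ^ (144 * m) * (A * EE ^ (24 * m)) := by
      rw [DD, mul_pow, ← pow_mul, ← pow_mul]; ring
    rw [this, PowerSeries.coeff_X_pow_mul', if_neg (by omega)]
  have hdvd : PowerSeries.X ^ 144 ∣ S := by
    rw [PowerSeries.X_pow_dvd_iff]
    intro i hi
    rw [hS, serT, PowerSeries.coeff_mk]
    simp only [seqT, seqU, seqV]
    rw [hlow (m * i) (by nlinarith [hp.out.pos])]
    split_ifs
    · rw [hlow (i / m) (by
        have := Nat.div_le_self i m
        nlinarith [hp.out.pos])]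
      simp
    · simp
  obtain ⟨S', hS'⟩ := hdvd
  rw [hS'] at r2
  have r3 := r2.shift.mul (rep_Pinv.pow 24)
  have e2 : ((fun τ => g τ / qq τ ^ 144) * (fun τ : ℍ => (Pfun τ)⁻¹) ^ 24) = g / discriminant := by
    ext τ
    simp only [Pi.mul_apply, Pi.pow_apply, Pi.div_apply, disc_eq]
    have := Pfun_ne τ
    have := qq_ne τ
    field_simp
  rw [e2] at r3
  refine ⟨w + 1, g / discriminant, S' * EI ^ 24, by omega, h3, r3, ?_⟩
  let φ := PowerSeries.map (Int.castRingHom (ZMod m))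
  have p1 : S' * EI ^ 24 * DD = S := by
    rw [hS', DD]
    calc S' * EI ^ 24 * (PowerSeries.X ^ 144 * EE ^ 24)
        = PowerSeries.X ^ 144 * S' * (EE * EI) ^ 24 := by ring
      _ = _ := by rw [EE_EI]; ring
  have p2 : φ S = PowerSeries.mk (fun i => PowerSeries.coeff (m * i) (φ A)) * φ DD := by
    ext n
    rw [← coeff_mul_expand (φ A) (φ DD) hm0, ← pow_eq_expand, ← map_pow, ← map_mul]
    simp only [φ, PowerSeries.coeff_map, hS, serT, PowerSeries.coeff_mk, seqT, seqU]
    have : (Int.castRingHom (ZMod m)) c = 0 := by simp [hc]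
    rw [map_add, (Int.castRingHom (ZMod m)).map_mul c, this, zero_mul, add_zero]
  have p3 : φ DD ≠ 0 := by
    intro h0
    have h4 : φ (DD * EI ^ 24) = 0 := by rw [map_mul, h0, zero_mul]
    have h5 : DD * EI ^ 24 = PowerSeries.X ^ 144 := by
      rw [DD, mul_assoc, ← mul_pow, EE_EI]; simp
    rw [h5, map_pow, PowerSeries.map_X] at h4
    exact pow_ne_zero _ PowerSeries.X_ne_zero h4
  have p4 : φ (S' * EI ^ 24) = PowerSeries.mk (fun i => PowerSeries.coeff (m * i) (φ A)) := by
    refine mul_right_cancel₀ p3 ?_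
    rw [← map_mul, p1, p2]
  intro n
  have := congrArg (PowerSeries.coeff n) p4
  simpa only [φ, PowerSeries.coeff_map, PowerSeries.coeff_mk, eq_intCast] using this

end P9
end B6

namespace B6
section P10
open UpperHalfPlane ModularForm Matrix Matrix.SpecialLinearGroup Filter Asymptotics
open scoped MatrixGroups Manifold ModularForm

/-- `e(x/24)` -/
noncomputable def e24 (n : ℤ) : ℂ := Complex.exp (2 * Real.pi * Complex.I * n / 24)

lemma e24_add (m n : ℤ) : e24 (m + n) = e24 m * e24 n := by
  rw [e24, e24, e24, ← Complex.exp_add]; congr 1; push_cast; ring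

lemma e24_pow (m : ℤ) (n : ℕ) : e24 m ^ n = e24 (m * n) := by
  rw [e24, e24, ← Complex.exp_nat_mul]; congr 1; push_cast; ring

lemma e24_24 : e24 24 = 1 := by
  rw [e24, ← Complex.exp_two_pi_mul_I]; congr 1; push_cast; ring

lemma e24_12 : e24 12 = -1 := by
  rw [e24, ← Complex.exp_pi_mul_I]; congr 1; push_cast; ring

lemma e24_zero : e24 0 = 1 := by simp [e24]

lemma e24_ne (n : ℤ) : e24 n ≠ 0 := Complex.exp_ne_zero _

lemma eta_add_int (z : ℂ) (n : ℤ) : eta (z + n) = e24 n * eta z := by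
  have h1 : Function.Periodic.qParam 1 (z + n) = Function.Periodic.qParam 1 z := by
    rw [Function.Periodic.qParam, Function.Periodic.qParam]
    have : 2 * Real.pi * Complex.I * (z + n) / ((1 : ℝ) : ℂ)
        = 2 * Real.pi * Complex.I * z / ((1 : ℝ) : ℂ) + n * (2 * Real.pi * Complex.I) := by
      push_cast; ring
    rw [this, Complex.exp_add, Complex.exp_int_mul_two_pi_mul_I, mul_one]
  have h2 : Function.Periodic.qParam 24 (z + n) = e24 n * Function.Periodic.qParam 24 z := by
    rw [Function.Periodic.qParam, Function.Periodic.qParam, e24, ← Complex.exp_add]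
    congr 1; push_cast; ring
  simp only [eta, eta_q, h1, h2, mul_assoc]

lemma sqrt_mul_pos {r : ℝ} (hr : 0 < r) {z : ℂ} (hz : z ≠ 0) :
    Complex.sqrt (r * z) = Complex.sqrt r * Complex.sqrt z := by
  have hr' : (r : ℂ) ≠ 0 := by exact_mod_cast hr.ne'
  simp only [Complex.sqrt]
  rw [Complex.cpow_def_of_ne_zero (mul_ne_zero hr' hz),
    Complex.cpow_def_of_ne_zero hr', Complex.cpow_def_of_ne_zero hz, Complex.log_ofReal_mul hr hz,
    ← Complex.exp_add, Complex.ofReal_log hr.le, add_mul]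

lemma sqrt_ne {z : ℂ} (hz : z ≠ 0) : Complex.sqrt z ≠ 0 := by
  simp [Complex.sqrt, hz]

lemma eta_S {z : ℂ} (hz : 0 < z.im) :
    eta (-1 / z) = (Complex.sqrt Complex.I)⁻¹ * (Complex.sqrt z * eta z) :=
  eta_comp_eq_csqrt_I_inv hz

/-- quotients `η(pτ)/η(τ)` on the upper half plane -/
noncomputable def Wf (p : ℕ) (τ : ℍ) : ℂ := eta (p * τ) / eta τ

lemma im_mul_pos {p : ℕ} (hp : 0 < p) (τ : ℍ) : 0 < ((p : ℂ) * τ).im := by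
  have : (0 : ℝ) < p := by exact_mod_cast hp
  simp [Complex.mul_im, this, τ.im_pos]

lemma Wf_ne {p : ℕ} (hp : 0 < p) (τ : ℍ) : Wf p τ ≠ 0 :=
  div_ne_zero (eta_ne_zero (im_mul_pos hp τ)) (eta_ne_zero τ.2)

lemma Wf_T (p : ℕ) (τ : ℍ) : Wf p (ModularGroup.T • τ) = e24 (p - 1) * Wf p τ := by
  have h1 : ((ModularGroup.T • τ : ℍ) : ℂ) = τ + ((1 : ℤ) : ℂ) := by
    rw [modular_T_smul]; simp [add_comm]
  have h2 : (p : ℂ) * (τ + ((1 : ℤ) : ℂ)) = p * τ + ((p : ℤ) : ℂ) := by push_cast; ring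
  have h3 : e24 p = e24 (p - 1) * e24 1 := by rw [← e24_add]; congr 1; ring
  rw [Wf, Wf, h1, h2, eta_add_int, eta_add_int, h3]
  have := e24_ne 1
  field_simp

/-- `V_p = [[1,0],[p,1]]` -/
def Vm (p : ℕ) : SL(2, ℤ) := ⟨!![1, 0; p, 1], by simp [Matrix.det_fin_two]⟩

lemma Wf_sigma {p : ℕ} (hp : 0 < p) {s : ℂ} (hs : 0 < s.im) :
    eta (p * (-1 / s)) / eta (-1 / s) = Complex.sqrt ((p : ℝ)⁻¹ : ℝ) * (eta (s / p) / eta s) := by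
  have hpR : (0 : ℝ) < p := by exact_mod_cast hp
  have hpC : (p : ℂ) ≠ 0 := by exact_mod_cast hp.ne'
  have hs0 : s ≠ 0 := by rintro rfl; simp at hs
  have h1 : (p : ℂ) * (-1 / s) = -1 / (s / p) := by field_simp
  have h2 : 0 < (s / p).im := by
    rw [Complex.div_natCast_im]; positivity
  have h3 : s / p = (((p : ℝ)⁻¹ : ℝ) : ℂ) * s := by push_cast; field_simp
  rw [h1, eta_S h2, eta_S hs]
  have e1 : Complex.sqrt (s / p) = Complex.sqrt ((p : ℝ)⁻¹ : ℝ) * Complex.sqrt s := by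
    rw [h3, sqrt_mul_pos (by positivity) hs0]
  rw [e1]
  have n1 := sqrt_ne hs0
  have n2 := sqrt_ne Complex.I_ne_zero
  have n3 : eta s ≠ 0 := eta_ne_zero hs
  field_simp

lemma Wf_V {p : ℕ} (hp : 0 < p) (τ : ℍ) : Wf p (Vm p • τ) = e24 (p - 1) * Wf p τ := by
  have hpC : (p : ℂ) ≠ 0 := by exact_mod_cast hp.ne'
  have hτ := τ.ne_zero
  set s : ℂ := -1 / τ with hs
  have hsim : 0 < s.im := by
    have := (ModularGroup.S • τ).im_pos
    have h2 := UpperHalfPlane.modular_S_smul τ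
    rw [h2] at this
    have e : ((-(τ : ℂ))⁻¹) = s := by rw [hs]; field_simp
    simpa [e] using! this
  have h1 : (τ : ℂ) = -1 / s := by rw [hs]; field_simp
  have hs0 : s ≠ 0 := by rintro h; rw [h] at hsim; simp at hsim
  have hsim' : 0 < (s - p).im := by simpa using hsim
  have hsp : s - p ≠ 0 := by intro h; rw [h] at hsim'; simp at hsim'
  have h2 : ((Vm p • τ : ℍ) : ℂ) = -1 / (s - p) := by
    rw [UpperHalfPlane.coe_specialLinearGroup_apply]
    have : (p : ℂ) * τ + 1 ≠ 0 := by
      rw [h1]; intro h; apply hsp; field_simp at h; linear_combination h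
    have h5 : (p : ℂ) * (-1 / s) + 1 = (s - p) / s := by field_simp; ring
    have h6 : ((τ : ℂ)) / (p * τ + 1) = -1 / (s - p) := by
      rw [h1, h5]; field_simp
    simpa [Vm] using h6
  have e1 : Wf p τ = Complex.sqrt ((p : ℝ)⁻¹ : ℝ) * (eta (s / p) / eta s) := by
    rw [Wf, h1, Wf_sigma hp hsim]
  rw [e1, Wf, h2, Wf_sigma hp hsim']
  have e2 : (s - p) / p = s / p + ((-1 : ℤ) : ℂ) := by push_cast; field_simp; ring
  have e3 : s - p = s + ((-(p : ℤ) : ℤ) : ℂ) := by push_cast; ring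
  rw [e2, e3, eta_add_int, eta_add_int]
  have e4 : e24 (-1) = e24 (p - 1) * e24 (-p) := by rw [← e24_add]; congr 1; ring
  rw [e4]
  have := e24_ne (-p)
  field_simp

end P10
end B6

namespace B6
section P11
open UpperHalfPlane ModularForm Matrix Matrix.SpecialLinearGroup Filter Asymptotics
open scoped MatrixGroups Manifold ModularForm

lemma exists_balanced (d c : ℤ) (hc : c ≠ 0) : ∃ k : ℤ, 2 * |d + k * c| ≤ |c| := by
  have h1 := Int.emod_nonneg d hc
  have h2 := Int.emod_lt_abs d hc
  have h3 := Int.emod_add_mul_ediv d c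
  by_cases h : 2 * (d % c) ≤ |c|
  · refine ⟨-(d / c), ?_⟩
    have : d + -(d / c) * c = d % c := by linear_combination -h3
    rw [this, abs_of_nonneg h1]; exact h
  · refine ⟨-(d / c) - c.sign, ?_⟩
    have : d + (-(d / c) - c.sign) * c = d % c - |c| := by
      have := Int.sign_mul_self_eq_abs c
      linear_combination -h3 - this
    rw [this, abs_of_nonpos (by linarith)]; push Not at h; linarith

/-- `[[1,n],[0,1]]` -/
def Tm (n : ℤ) : SL(2, ℤ) := ⟨!![1, n; 0, 1], by simp [Matrix.det_fin_two]⟩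
/-- `[[1,0],[n,1]]` -/
def Um (n : ℤ) : SL(2, ℤ) := ⟨!![1, 0; n, 1], by simp [Matrix.det_fin_two]⟩

lemma Tm_coe (n : ℤ) : (Tm n : Matrix (Fin 2) (Fin 2) ℤ) = !![1, n; 0, 1] := rfl
lemma Um_coe (n : ℤ) : (Um n : Matrix (Fin 2) (Fin 2) ℤ) = !![1, 0; n, 1] := rfl

lemma Tm_add (m n : ℤ) : Tm (m + n) = Tm m * Tm n := by
  ext i j; fin_cases i <;> fin_cases j <;> simp [Tm_coe, Matrix.mul_apply, Fin.sum_univ_two, add_comm]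
lemma Um_add (m n : ℤ) : Um (m + n) = Um m * Um n := by
  ext i j; fin_cases i <;> fin_cases j <;> simp [Um_coe, Matrix.mul_apply, Fin.sum_univ_two]
lemma Tm_one : Tm 1 = ModularGroup.T := by
  ext i j; fin_cases i <;> fin_cases j <;> simp [Tm_coe, ModularGroup.T]
lemma Um_p (p : ℕ) : Um p = Vm p := by
  ext i j; fin_cases i <;> fin_cases j <;> simp [Um_coe, Vm]
lemma Tm_zero : Tm 0 = 1 := by
  ext i j; fin_cases i <;> fin_cases j <;> simp [Tm_coe]
lemma Um_zero : Um 0 = 1 := by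
  ext i j; fin_cases i <;> fin_cases j <;> simp [Um_coe]

lemma mul_T_entries (γ : SL(2, ℤ)) (n : ℤ) : (γ * Tm n) 0 0 = γ 0 0 ∧
    (γ * Tm n) 0 1 = γ 0 0 * n + γ 0 1 ∧ (γ * Tm n) 1 0 = γ 1 0 ∧
    (γ * Tm n) 1 1 = γ 1 0 * n + γ 1 1 := by
  simp [Tm_coe, Matrix.mul_apply, Fin.sum_univ_two]
lemma mul_U_entries (γ : SL(2, ℤ)) (n : ℤ) : (γ * Um n) 0 0 = γ 0 0 + γ 0 1 * n ∧
    (γ * Um n) 0 1 = γ 0 1 ∧ (γ * Um n) 1 0 = γ 1 0 + γ 1 1 * n ∧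
    (γ * Um n) 1 1 = γ 1 1 := by
  simp [Um_coe, Matrix.mul_apply, Fin.sum_univ_two]

lemma SL_det (γ : SL(2, ℤ)) : γ 0 0 * γ 1 1 - γ 0 1 * γ 1 0 = 1 := by
  have := γ.2; rwa [Matrix.det_fin_two] at this

theorem gamma0_induction {p : ℕ} (hp2 : 2 ≤ p) (hp3 : p ≤ 3) (P : SL(2, ℤ) → Prop) (h1 : P 1)
    (hT : ∀ γ : SL(2, ℤ), (p : ℤ) ∣ γ 1 0 → (P (γ * Tm 1) ↔ P γ))
    (hV : ∀ γ : SL(2, ℤ), (p : ℤ) ∣ γ 1 0 → (P (γ * Um p) ↔ P γ))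
    (hn : ∀ γ : SL(2, ℤ), (p : ℤ) ∣ γ 1 0 → (P (-γ) ↔ P γ))
    (γ : SL(2, ℤ)) (hγ : (p : ℤ) ∣ γ 1 0) : P γ := by
  have hTn : ∀ (n : ℤ) (γ : SL(2, ℤ)), (p : ℤ) ∣ γ 1 0 → (P (γ * Tm n) ↔ P γ) := by
    intro n
    induction n using Int.induction_on with
    | zero => intro γ _; rw [Tm_zero, mul_one]
    | succ i ih =>
      intro γ h
      rw [Tm_add, ← mul_assoc, hT _ (by rw [(mul_T_entries _ _).2.2.1]; exact h), ih γ h]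
    | pred i ih =>
      intro γ h
      rw [← hT _ (by rw [(mul_T_entries _ _).2.2.1]; exact h), mul_assoc, ← Tm_add,
        sub_add_cancel, ih γ h]
  have hVn : ∀ (n : ℤ) (γ : SL(2, ℤ)), (p : ℤ) ∣ γ 1 0 → (P (γ * Um (p * n)) ↔ P γ) := by
    have hd : ∀ (n : ℤ) (γ : SL(2, ℤ)), (p : ℤ) ∣ γ 1 0 → (p : ℤ) ∣ (γ * Um (p * n)) 1 0 := by
      intro n γ h
      rw [(mul_U_entries _ _).2.2.1]
      exact dvd_add h (Dvd.intro_left _ (by ring : γ 1 1 * n * p = _))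
    intro n
    induction n using Int.induction_on with
    | zero => intro γ _; rw [mul_zero, Um_zero, mul_one]
    | succ i ih =>
      intro γ h
      rw [mul_add, Um_add, ← mul_assoc, mul_one, hV _ (hd _ _ h), ih γ h]
    | pred i ih =>
      intro γ h
      rw [← hV _ (hd _ _ h), mul_assoc, ← Um_add, show (p : ℤ) * (-(i : ℤ) - 1) + p = p * (-i) by ring,
        ih γ h]
  induction hN : (γ 1 0).natAbs using Nat.strong_induction_on generalizing γ with
  | _ N ih =>
    by_cases hc : γ 1 0 = 0
    · have hdet := SL_det γ
      rw [hc, mul_zero, sub_zero] at hdet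
      rcases Int.eq_one_or_neg_one_of_mul_eq_one' hdet with ⟨ha, hd⟩ | ⟨ha, hd⟩
      · have : γ = 1 * Tm (γ 0 1) := by
          ext i j; fin_cases i <;> fin_cases j <;> simp [Tm_coe, ha, hd, hc]
        rw [this, hTn _ _ (by simp)]; exact h1
      · have : γ = -(1 * Tm (-γ 0 1)) := by
          ext i j; fin_cases i <;> fin_cases j <;> simp [Tm_coe, ha, hd, hc]
        rw [this, hn _ (by simp [Tm_coe]), hTn _ _ (by simp)]; exact h1
    · obtain ⟨k, hk⟩ := exists_balanced (γ 1 1) (γ 1 0) hc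
      rw [← hTn k γ hγ]
      obtain ⟨-, -, e3, e4⟩ := mul_T_entries γ k
      set δ := γ * Tm k
      have hδ : (p : ℤ) ∣ δ 1 0 := e3 ▸ hγ
      have e5 : γ 1 1 + k * γ 1 0 = δ 1 1 := by rw [e4]; ring
      rw [e5, ← e3] at hk
      have hd0 : δ 1 1 ≠ 0 := by
        intro h0
        have hdet := SL_det δ
        rw [h0] at hdet
        have : (p : ℤ) ∣ 1 := by rw [← hdet, mul_zero, zero_sub]; exact (hδ.mul_left _).neg_right
        have := Int.le_of_dvd one_pos this
        omega
      have hpd : (p : ℤ) * δ 1 1 ≠ 0 := mul_ne_zero (by omega) hd0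
      obtain ⟨l, hl⟩ := exists_balanced (δ 1 0) _ hpd
      rw [← hVn l δ hδ]
      obtain ⟨-, -, g3, g4⟩ := mul_U_entries δ (p * l)
      have e6 : δ 1 0 + l * (p * δ 1 1) = (δ * Um (p * l)) 1 0 := by rw [g3]; ring
      rw [e6, abs_mul, abs_of_nonneg (by positivity : (0 : ℤ) ≤ p)] at hl
      refine ih _ ?_ _ (by rw [← e6]; exact dvd_add hδ ⟨l * δ 1 1, by ring⟩) rfl
      rw [← hN, ← e3]
      have hp3' : (p : ℤ) ≤ 3 := by exact_mod_cast hp3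
      have := mul_le_mul_of_nonneg_right hp3' (abs_nonneg (δ 1 1))
      have hpos : 0 < |δ 1 0| := abs_pos.mpr (e3 ▸ hc)
      zify
      linarith

theorem Wf_mult {p : ℕ} (hp2 : 2 ≤ p) (hp3 : p ≤ 3) (n : ℕ) (χ : SL(2, ℤ) → ℂ) (h1 : χ 1 = 1)
    (hT : ∀ γ : SL(2, ℤ), (p : ℤ) ∣ γ 1 0 → χ (γ * Tm 1) = χ γ * e24 ((p - 1) * n))
    (hV : ∀ γ : SL(2, ℤ), (p : ℤ) ∣ γ 1 0 → χ (γ * Um p) = χ γ * e24 ((p - 1) * n))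
    (hn : ∀ γ : SL(2, ℤ), (p : ℤ) ∣ γ 1 0 → χ (-γ) = χ γ)
    (γ : SL(2, ℤ)) (hγ : (p : ℤ) ∣ γ 1 0) (τ : ℍ) : Wf p (γ • τ) ^ n = χ γ * Wf p τ ^ n := by
  have key : ∀ (A : SL(2, ℤ)), (∀ τ : ℍ, Wf p (A • τ) = e24 (p - 1) * Wf p τ) →
      ∀ γ, χ (γ * A) = χ γ * e24 ((p - 1) * n) →
      ((∀ τ : ℍ, Wf p ((γ * A) • τ) ^ n = χ (γ * A) * Wf p τ ^ n) ↔
        (∀ τ : ℍ, Wf p (γ • τ) ^ n = χ γ * Wf p τ ^ n)) := by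
    intro A hA γ hχ
    have e1 : ∀ τ : ℍ, Wf p (A • τ) ^ n = e24 ((p - 1) * n) * Wf p τ ^ n := by
      intro τ; rw [hA, mul_pow, e24_pow]
    constructor
    · intro h τ
      have h2 := h (A⁻¹ • τ)
      have h3 := e1 (A⁻¹ • τ)
      rw [smul_inv_smul] at h3
      rw [mul_smul, smul_inv_smul, hχ, mul_assoc, ← h3] at h2
      exact h2
    · intro h τ
      rw [mul_smul, h, e1, hχ, mul_assoc]
  refine gamma0_induction hp2 hp3 (fun γ => ∀ τ : ℍ, Wf p (γ • τ) ^ n = χ γ * Wf p τ ^ n)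
    ?_ ?_ ?_ ?_ γ hγ τ
  · intro τ; rw [h1, one_smul, one_mul]
  · intro γ h
    exact key _ (fun τ => by rw [Tm_one, Wf_T]) γ (hT γ h)
  · intro γ h
    exact key _ (fun τ => by rw [Um_p, Wf_V (by omega)]) γ (hV γ h)
  · intro γ h
    simp only [hn γ h, ModularGroup.SL_neg_smul]

end P11
end B6

namespace B6
section P12
open UpperHalfPlane ModularForm Matrix Matrix.SpecialLinearGroup Filter Asymptotics
open scoped MatrixGroups Manifold ModularForm

/-- exponent of the multiplier of the fourth power of `η(3τ)/η(τ)` -/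
def f34 (a b c' d : ZMod 3) : ZMod 3 := b * d + c' * a
/-- exponent of the multiplier of the cube of `η(3τ)/η(τ)` -/
def f33 (a b c d : ZMod 4) : ZMod 4 :=
  if c = 1 ∨ c = 3 then (a + d) * c - b * d * (c ^ 2 - 1) - 3 * c
  else (a + d) * c - b * d * (c ^ 2 - 1) + 3 * d - 3 - 3 * c * d
/-- exponent of the multiplier of the eighth power of `η(2τ)/η(τ)` -/
def f28 (a b c d : ZMod 3) : ZMod 3 := (a + d) * c - b * d * (c ^ 2 - 1)
/-- exponent of the multiplier of the cube of `η(2τ)/η(τ)` -/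
def f23 (a b c' d : ZMod 8) : ZMod 8 :=
  -(a + d) * c' + b * d * (2 * c' ^ 2 + 1) + 3 * c' * d + (if d = 3 ∨ d = 5 then 4 else 0)

lemma f34_T : ∀ a b c d : ZMod 3, a * d = 1 → f34 a (a + b) c d = f34 a b c d + 1 := by
  decide
lemma f34_V : ∀ a b c d : ZMod 3, a * d = 1 → f34 a b (c + d) d = f34 a b c d + 1 := by
  decide
lemma f34_neg : ∀ a b c d : ZMod 3, f34 (-a) (-b) (-c) (-d) = f34 a b c d := by
  decide
lemma f33_T : ∀ a b c d : ZMod 4, a * d - b * c = 1 → f33 a (a + b) c (c + d) = f33 a b c d + 1 := by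
  decide
lemma f33_V : ∀ a b c d : ZMod 4, a * d - b * c = 1 →
    f33 (a + b * 3) b (c + d * 3) d = f33 a b c d + 1 := by
  decide
lemma f33_neg : ∀ a b c d : ZMod 4, a * d - b * c = 1 →
    f33 (-a) (-b) (-c) (-d) = f33 a b c d + 2 := by
  decide
lemma f28_T : ∀ a b c d : ZMod 3, a * d - b * c = 1 → f28 a (a + b) c (c + d) = f28 a b c d + 1 := by
  decide
lemma f28_V : ∀ a b c d : ZMod 3, a * d - b * c = 1 →
    f28 (a + b * 2) b (c + d * 2) d = f28 a b c d + 1 := by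
  decide
lemma f28_neg : ∀ a b c d : ZMod 3,
    f28 (-a) (-b) (-c) (-d) = f28 a b c d := by
  decide
set_option maxRecDepth 10000 in
lemma f23_T' : ∀ b c d : ZMod 8, d * d = 1 →
    f23 (d * (1 + 2 * b * c)) (d * (1 + 2 * b * c) + b) c (2 * c + d)
    = f23 (d * (1 + 2 * b * c)) b c d + 1 := by
  decide
set_option maxRecDepth 10000 in
lemma f23_V' : ∀ b c d : ZMod 8, d * d = 1 →
    f23 (d * (1 + 2 * b * c) + 2 * b) b (c + d) d
    = f23 (d * (1 + 2 * b * c)) b c d + 1 := by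
  decide
set_option maxRecDepth 10000 in
lemma unit8 : ∀ x d y : ZMod 8, x * d - 2 * y = 1 → d * d = 1 := by
  decide
lemma f23_aux {a b c d : ZMod 8} (h : a * d - b * (2 * c) = 1) :
    d * d = 1 ∧ a = d * (1 + 2 * b * c) := by
  have hd : d * d = 1 := unit8 a d (b * c) (by rw [← h]; ring)
  exact ⟨hd, by linear_combination (-a) * hd + d * h⟩
lemma f23_T {a b c d : ZMod 8} (h : a * d - b * (2 * c) = 1) :
    f23 a (a + b) c (2 * c + d) = f23 a b c d + 1 := by
  obtain ⟨hd, rfl⟩ := f23_aux h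
  exact f23_T' b c d hd
lemma f23_V {a b c d : ZMod 8} (h : a * d - b * (2 * c) = 1) :
    f23 (a + b * 2) b (c + d) d = f23 a b c d + 1 := by
  obtain ⟨hd, rfl⟩ := f23_aux h
  rw [mul_comm b 2]
  exact f23_V' b c d hd
lemma f23_neg (a b c d : ZMod 8) : f23 (-a) (-b) (-c) (-d) = f23 a b c d := by
  have h : ∀ d : ZMod 8, (-d = 3 ∨ -d = 5) ↔ (d = 3 ∨ d = 5) := by decide
  simp only [f23, h]; ring

lemma zp_add {N : ℕ} [NeZero N] {ζ : ℂ} (h : ζ ^ N = 1) (x y : ZMod N) :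
    ζ ^ (x + y).val = ζ ^ x.val * ζ ^ y.val := by
  rw [ZMod.val_add, ← pow_add]
  conv_rhs => rw [← Nat.mod_add_div (x.val + y.val) N, pow_add, pow_mul, h, one_pow, mul_one]

lemma det_cast (R : Type*) [CommRing R] (γ : SL(2, ℤ)) :
    ((γ 0 0 : ℤ) : R) * ((γ 1 1 : ℤ) : R) - ((γ 0 1 : ℤ) : R) * ((γ 1 0 : ℤ) : R) = 1 := by
  have := congrArg (Int.cast : ℤ → R) (SL_det γ)
  push_cast at this
  exact this

lemma neg_entries (γ : SL(2, ℤ)) : (-γ) 0 0 = -γ 0 0 ∧ (-γ) 0 1 = -γ 0 1 ∧ (-γ) 1 0 = -γ 1 0 ∧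
    (-γ) 1 1 = -γ 1 1 := by simp

lemma Wf3_4 (γ : SL(2, ℤ)) (hγ : (3 : ℤ) ∣ γ 1 0) (τ : ℍ) : Wf 3 (γ • τ) ^ 4 =
    e24 8 ^ (f34 (γ 0 0 : ℤ) (γ 0 1 : ℤ) (γ 1 0 / 3 : ℤ) (γ 1 1 : ℤ)).val * Wf 3 τ ^ 4 := by
  have hz : e24 8 ^ 3 = 1 := by rw [e24_pow, ← e24_24]; rfl
  have h1v : e24 8 ^ (1 : ZMod 3).val = e24 8 := by rw [show (1 : ZMod 3).val = 1 from rfl, pow_one]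
  have h3 : (3 : ZMod 3) = 0 := rfl
  refine Wf_mult (p := 3) (by norm_num) (by norm_num) 4 (fun γ : SL(2, ℤ) =>
    e24 8 ^ (f34 (γ 0 0 : ℤ) (γ 0 1 : ℤ) (γ 1 0 / 3 : ℤ) (γ 1 1 : ℤ)).val) ?_ ?_ ?_ ?_ γ hγ τ
  · simp [f34]
  · intro γ h
    obtain ⟨c, hc⟩ := h
    have hd := det_cast (ZMod 3) γ
    obtain ⟨e1, e2, e3, e4⟩ := mul_T_entries γ 1
    have hc3 : γ 1 0 / 3 = c := by rw [hc]; push_cast; omega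
    simp only [e1, e2, e3, e4, hc3]
    rw [hc] at hd ⊢
    push_cast at hd ⊢
    simp only [h3, zero_mul, mul_zero, sub_zero, zero_add, mul_one] at hd ⊢
    rw [f34_T _ _ _ _ hd, zp_add hz, h1v]
  · intro γ h
    obtain ⟨c, hc⟩ := h
    have hd := det_cast (ZMod 3) γ
    obtain ⟨e1, e2, e3, e4⟩ := mul_U_entries γ (3 : ℕ)
    have hc3 : γ 1 0 / 3 = c := by rw [hc]; push_cast; omega
    have hc4 : (γ 1 0 + γ 1 1 * (3 : ℕ)) / 3 = c + γ 1 1 := by rw [hc]; push_cast; omega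
    simp only [e1, e2, e3, e4, hc3, hc4]
    rw [hc] at hd
    push_cast at hd ⊢
    simp only [h3, zero_mul, mul_zero, sub_zero, add_zero] at hd ⊢
    rw [f34_V _ _ _ _ hd, zp_add hz, h1v]
  · intro γ h
    obtain ⟨c, hc⟩ := h
    obtain ⟨e1, e2, e3, e4⟩ := neg_entries γ
    have hc3 : γ 1 0 / 3 = c := by rw [hc]; push_cast; omega
    have hc4 : (-γ 1 0) / 3 = -c := by rw [hc]; push_cast; omega
    simp only [e1, e2, e3, e4, hc3, hc4]
    push_cast
    rw [f34_neg]

/-- the sign character modulo 3 -/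
def sg3 (d : ZMod 3) : ℂ := if d = 2 then -1 else 1

lemma sg3_neg (d : ZMod 3) (hd : d ≠ 0) : sg3 (-d) = - sg3 d := by
  have : d = 1 ∨ d = 2 := by revert d; decide
  rcases this with rfl | rfl
  · rw [sg3, sg3, if_pos (by decide), if_neg (by decide)]
  · rw [sg3, sg3, if_neg (by decide), if_pos (by decide)]; norm_num

lemma Wf3_3 (γ : SL(2, ℤ)) (hγ : (3 : ℤ) ∣ γ 1 0) (τ : ℍ) : Wf 3 (γ • τ) ^ 3 =
    e24 6 ^ (f33 (γ 0 0 : ℤ) (γ 0 1 : ℤ) (γ 1 0 : ℤ) (γ 1 1 : ℤ)).val * sg3 (γ 1 1 : ℤ)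
      * Wf 3 τ ^ 3 := by
  have hz : e24 6 ^ 4 = 1 := by rw [e24_pow, ← e24_24]; rfl
  have h1v : e24 6 ^ (1 : ZMod 4).val = e24 6 := by rw [show (1 : ZMod 4).val = 1 from rfl, pow_one]
  have h2v : e24 6 ^ (2 : ZMod 4).val = -1 := by
    rw [show (2 : ZMod 4).val = 2 from rfl, e24_pow, ← e24_12]; rfl
  have h3 : (3 : ZMod 3) = 0 := rfl
  refine Wf_mult (p := 3) (by norm_num) (by norm_num) 3 (fun γ : SL(2, ℤ) =>
    e24 6 ^ (f33 (γ 0 0 : ℤ) (γ 0 1 : ℤ) (γ 1 0 : ℤ) (γ 1 1 : ℤ)).val * sg3 (γ 1 1 : ℤ))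
    ?_ ?_ ?_ ?_ γ hγ τ
  · have : f33 1 0 0 1 = 0 := by decide
    have h2 : ¬ (1 : ZMod 3) = 2 := by decide
    simp [this, sg3, h2]
  · intro γ h
    obtain ⟨c, hc⟩ := h
    have hd := det_cast (ZMod 4) γ
    obtain ⟨e1, e2, e3, e4⟩ := mul_T_entries γ 1
    have h5 : (((γ 1 0 * 1 + γ 1 1 : ℤ)) : ZMod 3) = ((γ 1 1 : ℤ) : ZMod 3) := by
      rw [hc]; push_cast; rw [h3]; ring
    simp only [e1, e2, e3, e4, h5]
    push_cast
    simp only [mul_one]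
    rw [f33_T _ _ _ _ hd, zp_add hz, h1v]; ring
  · intro γ h
    have hd := det_cast (ZMod 4) γ
    obtain ⟨e1, e2, e3, e4⟩ := mul_U_entries γ (3 : ℕ)
    simp only [e1, e2, e3, e4]
    push_cast
    rw [f33_V _ _ _ _ hd, zp_add hz, h1v]; ring
  · intro γ h
    obtain ⟨c, hc⟩ := h
    have hd := det_cast (ZMod 4) γ
    have hd3 := det_cast (ZMod 3) γ
    obtain ⟨e1, e2, e3, e4⟩ := neg_entries γ
    simp only [e1, e2, e3, e4]
    push_cast
    have hne : ((γ 1 1 : ℤ) : ZMod 3) ≠ 0 := by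
      intro h0
      rw [h0, hc] at hd3; push_cast at hd3; rw [h3] at hd3; simp at hd3
    rw [f33_neg _ _ _ _ hd, zp_add hz, h2v, sg3_neg _ hne]; ring

lemma Wf2_8 (γ : SL(2, ℤ)) (hγ : (2 : ℤ) ∣ γ 1 0) (τ : ℍ) : Wf 2 (γ • τ) ^ 8 =
    e24 8 ^ (f28 (γ 0 0 : ℤ) (γ 0 1 : ℤ) (γ 1 0 : ℤ) (γ 1 1 : ℤ)).val * Wf 2 τ ^ 8 := by
  have hz : e24 8 ^ 3 = 1 := by rw [e24_pow, ← e24_24]; rfl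
  have h1v : e24 8 ^ (1 : ZMod 3).val = e24 8 := by rw [show (1 : ZMod 3).val = 1 from rfl, pow_one]
  refine Wf_mult (p := 2) (by norm_num) (by norm_num) 8 (fun γ : SL(2, ℤ) =>
    e24 8 ^ (f28 (γ 0 0 : ℤ) (γ 0 1 : ℤ) (γ 1 0 : ℤ) (γ 1 1 : ℤ)).val) ?_ ?_ ?_ ?_ γ hγ τ
  · have : f28 1 0 0 1 = 0 := by decide
    simp [this]
  · intro γ h
    have hd := det_cast (ZMod 3) γ
    obtain ⟨e1, e2, e3, e4⟩ := mul_T_entries γ 1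
    simp only [e1, e2, e3, e4]
    push_cast
    simp only [mul_one]
    rw [f28_T _ _ _ _ hd, zp_add hz, h1v]
  · intro γ h
    have hd := det_cast (ZMod 3) γ
    obtain ⟨e1, e2, e3, e4⟩ := mul_U_entries γ (2 : ℕ)
    simp only [e1, e2, e3, e4]
    push_cast
    rw [f28_V _ _ _ _ hd, zp_add hz, h1v]
  · intro γ h
    obtain ⟨e1, e2, e3, e4⟩ := neg_entries γ
    simp only [e1, e2, e3, e4]
    push_cast
    rw [f28_neg]

lemma Wf2_3 (γ : SL(2, ℤ)) (hγ : (2 : ℤ) ∣ γ 1 0) (τ : ℍ) : Wf 2 (γ • τ) ^ 3 =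
    e24 3 ^ (f23 (γ 0 0 : ℤ) (γ 0 1 : ℤ) (γ 1 0 / 2 : ℤ) (γ 1 1 : ℤ)).val * Wf 2 τ ^ 3 := by
  have hz : e24 3 ^ 8 = 1 := by rw [e24_pow, ← e24_24]; rfl
  have h1v : e24 3 ^ (1 : ZMod 8).val = e24 3 := by rw [show (1 : ZMod 8).val = 1 from rfl, pow_one]
  refine Wf_mult (p := 2) (by norm_num) (by norm_num) 3 (fun γ : SL(2, ℤ) =>
    e24 3 ^ (f23 (γ 0 0 : ℤ) (γ 0 1 : ℤ) (γ 1 0 / 2 : ℤ) (γ 1 1 : ℤ)).val) ?_ ?_ ?_ ?_ γ hγ τ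
  · have : f23 1 0 0 1 = 0 := by decide
    simp [this]
  · intro γ h
    obtain ⟨c, hc⟩ := h
    have hd := det_cast (ZMod 8) γ
    obtain ⟨e1, e2, e3, e4⟩ := mul_T_entries γ 1
    have hc3 : γ 1 0 / 2 = c := by rw [hc]; push_cast; omega
    simp only [e1, e2, e3, e4, hc3]
    rw [hc] at hd ⊢
    push_cast at hd ⊢
    simp only [mul_one] at hd ⊢
    rw [f23_T hd, zp_add hz, h1v]
  · intro γ h
    obtain ⟨c, hc⟩ := h
    have hd := det_cast (ZMod 8) γ
    obtain ⟨e1, e2, e3, e4⟩ := mul_U_entries γ (2 : ℕ)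
    have hc3 : γ 1 0 / 2 = c := by rw [hc]; push_cast; omega
    have hc4 : (γ 1 0 + γ 1 1 * (2 : ℕ)) / 2 = c + γ 1 1 := by rw [hc]; push_cast; omega
    simp only [e1, e2, e3, e4, hc3, hc4]
    rw [hc] at hd
    push_cast at hd ⊢
    rw [f23_V hd, zp_add hz, h1v]
  · intro γ h
    obtain ⟨c, hc⟩ := h
    obtain ⟨e1, e2, e3, e4⟩ := neg_entries γ
    have hc3 : γ 1 0 / 2 = c := by rw [hc]; push_cast; omega
    have hc4 : (-γ 1 0) / 2 = -c := by rw [hc]; push_cast; omega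
    simp only [e1, e2, e3, e4, hc3, hc4]
    push_cast
    rw [f23_neg]

end P12
end B6

namespace B6
section P13
open UpperHalfPlane ModularForm Matrix Matrix.SpecialLinearGroup Filter Asymptotics
open scoped MatrixGroups Manifold ModularForm

/-- `3τ` -/
noncomputable def mul3 (τ : ℍ) : ℍ := ⟨((3 : ℕ) : ℂ) * τ, im_mul_pos (by norm_num) τ⟩

lemma coe_mul3 (τ : ℍ) : ((mul3 τ : ℍ) : ℂ) = 3 * τ := by simp [mul3]

lemma Ffun_eq (τ : ℍ) : Ffun τ = Wf 2 (mul3 τ) * Wf 3 τ := by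
  have h : eta (3 * (τ : ℂ)) ≠ 0 := by
    rw [← coe_mul3]; exact eta_ne_zero (mul3 τ).2
  have h2 : eta (τ : ℂ) ≠ 0 := eta_ne_zero τ.2
  have e : (2 : ℂ) * (3 * τ) = 6 * τ := by ring
  simp only [Ffun, Wf, coe_mul3]
  push_cast
  rw [e, div_mul_div_cancel₀ h]

lemma Wf3_sign (γ : SL(2, ℤ)) (hb : (144 : ℤ) ∣ γ 0 1) (hc : (144 : ℤ) ∣ γ 1 0) (τ : ℍ) :
    Wf 3 (γ • τ) * (e24 6 ^ (3 * ((γ 1 1 : ℤ) : ZMod 4) - 3).val * sg3 (γ 1 1 : ℤ)) = Wf 3 τ := by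
  obtain ⟨b, hb⟩ := hb
  obtain ⟨c, hc⟩ := hc
  have h4 := Wf3_4 γ (by rw [hc]; exact ⟨48 * c, by ring⟩) τ
  have h3 := Wf3_3 γ (by rw [hc]; exact ⟨48 * c, by ring⟩) τ
  have c1 : γ 1 0 / 3 = 48 * c := by omega
  have e1 : f34 (γ 0 0 : ℤ) (γ 0 1 : ℤ) (γ 1 0 / 3 : ℤ) (γ 1 1 : ℤ) = 0 := by
    rw [c1, hb]; push_cast
    rw [show (144 : ZMod 3) = 0 from rfl, show (48 : ZMod 3) = 0 from rfl, f34]; ring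
  have e2 : f33 (γ 0 0 : ℤ) (γ 0 1 : ℤ) (γ 1 0 : ℤ) (γ 1 1 : ℤ) = 3 * ((γ 1 1 : ℤ) : ZMod 4) - 3 := by
    rw [hc, hb]; push_cast
    rw [show (144 : ZMod 4) = 0 from rfl, zero_mul, zero_mul, f33, if_neg (by decide)]; ring
  rw [e1] at h4
  rw [e2] at h3
  rw [ZMod.val_zero, pow_zero, one_mul] at h4
  have hne := Wf_ne (p := 3) (by norm_num) τ
  have h5 : Wf 3 (γ • τ) * Wf 3 (γ • τ) ^ 3 = Wf 3 τ * Wf 3 τ ^ 3 := by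
    rw [← pow_succ', h4, ← pow_succ']
  rw [h3, ← mul_assoc] at h5
  exact mul_right_cancel₀ (pow_ne_zero 3 hne) h5

lemma Wf2_sign (γ : SL(2, ℤ)) (hb : (24 : ℤ) ∣ γ 0 1) (hc : (48 : ℤ) ∣ γ 1 0) (τ : ℍ) :
    Wf 2 (γ • τ) = (e24 3 ^ (if ((γ 1 1 : ℤ) : ZMod 8) = 3 ∨ ((γ 1 1 : ℤ) : ZMod 8) = 5
      then (4 : ZMod 8) else 0).val) ^ 3 * Wf 2 τ := by
  obtain ⟨b, hb⟩ := hb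
  obtain ⟨c, hc⟩ := hc
  have h4 := Wf2_8 γ (by rw [hc]; exact ⟨24 * c, by ring⟩) τ
  have h3 := Wf2_3 γ (by rw [hc]; exact ⟨24 * c, by ring⟩) τ
  have c1 : γ 1 0 / 2 = 24 * c := by omega
  have e1 : f28 (γ 0 0 : ℤ) (γ 0 1 : ℤ) (γ 1 0 : ℤ) (γ 1 1 : ℤ) = 0 := by
    rw [hc, hb]; push_cast
    rw [show (24 : ZMod 3) = 0 from rfl, show (48 : ZMod 3) = 0 from rfl, f28]; ring
  have e2 : f23 (γ 0 0 : ℤ) (γ 0 1 : ℤ) (γ 1 0 / 2 : ℤ) (γ 1 1 : ℤ)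
      = if ((γ 1 1 : ℤ) : ZMod 8) = 3 ∨ ((γ 1 1 : ℤ) : ZMod 8) = 5 then (4 : ZMod 8) else 0 := by
    rw [c1, hb]; push_cast
    rw [show (24 : ZMod 8) = 0 from rfl, zero_mul, zero_mul, f23]; ring
  rw [e1] at h4
  rw [e2] at h3
  rw [ZMod.val_zero, pow_zero, one_mul] at h4
  have hne := Wf_ne (p := 2) (by norm_num) τ
  have h5 : Wf 2 (γ • τ) * Wf 2 (γ • τ) ^ 8 = (Wf 2 (γ • τ) ^ 3) ^ 3 := by ring
  rw [h3, h4] at h5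
  refine mul_right_cancel₀ (pow_ne_zero 8 hne) (h5.trans ?_)
  ring

lemma mul3_smul (γ γ' : SL(2, ℤ)) (h00 : γ' 0 0 = γ 0 0) (h01 : γ' 0 1 = 3 * γ 0 1)
    (h10 : 3 * γ' 1 0 = γ 1 0) (h11 : γ' 1 1 = γ 1 1) (τ : ℍ) :
    mul3 (γ • τ) = γ' • mul3 τ := by
  apply UpperHalfPlane.ext
  rw [coe_mul3, UpperHalfPlane.coe_specialLinearGroup_apply,
    UpperHalfPlane.coe_specialLinearGroup_apply, coe_mul3, h00, h01, h11, ← h10]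
  simp
  ring_nf

lemma Ffun_trans (γ : SL(2, ℤ)) (hb : (144 : ℤ) ∣ γ 0 1) (hc : (144 : ℤ) ∣ γ 1 0) (τ : ℍ) :
    Ffun (γ • τ) = (eps (γ 1 1) : ℂ) * Ffun τ := by
  have h3 := Wf3_sign γ hb hc τ
  have hdet := SL_det γ
  have hd24 := det_cast (ZMod 24) γ
  obtain ⟨b, hb⟩ := hb
  obtain ⟨c, hc⟩ := hc
  set γ' : SL(2, ℤ) := ⟨!![γ 0 0, 3 * γ 0 1; 48 * c, γ 1 1], by
    rw [Matrix.det_fin_two_of]; rw [hc] at hdet; linear_combination hdet⟩ with hγ'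
  have h2 := Wf2_sign γ' (by simp [hγ']; rw [hb]; exact ⟨18 * b, by ring⟩) (by simp [hγ'])
    (mul3 τ)
  have e11 : γ' 1 1 = γ 1 1 := by simp [hγ']
  rw [← mul3_smul γ γ' (by simp [hγ']) (by simp [hγ']) (by simp [hγ']; rw [hc]; ring) e11,
    e11] at h2
  rw [Ffun_eq, Ffun_eq, h2, ← h3]
  have e63 : ∀ n : ℕ, e24 6 ^ n = e24 (6 * n) := fun n => e24_pow 6 n
  have e33 : ∀ n : ℕ, e24 3 ^ n = e24 (3 * n) := fun n => e24_pow 3 n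
  have key : (e24 3 ^ (if ((γ 1 1 : ℤ) : ZMod 8) = 3 ∨ ((γ 1 1 : ℤ) : ZMod 8) = 5
      then (4 : ZMod 8) else 0).val) ^ 3 = (eps (γ 1 1) : ℂ) *
      (e24 6 ^ (3 * ((γ 1 1 : ℤ) : ZMod 4) - 3).val * sg3 (γ 1 1 : ℤ)) := by
    rw [hb] at hd24; push_cast at hd24
    rw [show (144 : ZMod 24) = 0 from rfl, zero_mul, zero_mul, sub_zero] at hd24
    have hcase : ∀ a d : ZMod 24, a * d = 1 → d = 1 ∨ d = 5 ∨ d = 7 ∨ d = 11 ∨ d = 13 ∨ d = 17 ∨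
      d = 19 ∨ d = 23 := by decide
    have hd := hcase _ _ hd24
    have k3 : ((γ 1 1 : ℤ) : ZMod 3) = ((((γ 1 1 : ℤ) : ZMod 24)).cast : ZMod 3) :=
      (ZMod.cast_intCast (by norm_num : 3 ∣ 24) _).symm
    have k4 : ((γ 1 1 : ℤ) : ZMod 4) = ((((γ 1 1 : ℤ) : ZMod 24)).cast : ZMod 4) :=
      (ZMod.cast_intCast (by norm_num : 4 ∣ 24) _).symm
    have k8 : ((γ 1 1 : ℤ) : ZMod 8) = ((((γ 1 1 : ℤ) : ZMod 24)).cast : ZMod 8) :=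
      (ZMod.cast_intCast (by norm_num : 8 ∣ 24) _).symm
    rw [k3, k4, k8, eps]
    have s1 : e24 3 ^ (4 : ZMod 8).val = -1 := by
      rw [show (4 : ZMod 8).val = 4 from rfl, e24_pow, ← e24_12]; rfl
    have s2 : e24 6 ^ (2 : ZMod 4).val = -1 := by
      rw [show (2 : ZMod 4).val = 2 from rfl, e24_pow, ← e24_12]; rfl
    generalize ((γ 1 1 : ℤ) : ZMod 24) = d at hd
    have t4 : 3 * (d.cast : ZMod 4) - 3 = if (d = 1 ∨ d = 5 ∨ d = 13 ∨ d = 17) then 0 else 2 := by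
      rcases hd with rfl | rfl | rfl | rfl | rfl | rfl | rfl | rfl <;> decide
    have t8 : ((d.cast : ZMod 8) = 3 ∨ (d.cast : ZMod 8) = 5) ↔
        (d = 5 ∨ d = 11 ∨ d = 13 ∨ d = 19) := by
      rcases hd with rfl | rfl | rfl | rfl | rfl | rfl | rfl | rfl <;> decide
    have t3 : (d.cast : ZMod 3) = 2 ↔ (d = 5 ∨ d = 11 ∨ d = 17 ∨ d = 23) := by
      rcases hd with rfl | rfl | rfl | rfl | rfl | rfl | rfl | rfl <;> decide
    have t24 : epsZ d = (if (d = 5 ∨ d = 11 ∨ d = 13 ∨ d = 19) then -1 else 1)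
        * (if (d = 1 ∨ d = 5 ∨ d = 13 ∨ d = 17) then 1 else -1)
        * (if (d = 5 ∨ d = 11 ∨ d = 17 ∨ d = 23) then -1 else 1) := by
      rcases hd with rfl | rfl | rfl | rfl | rfl | rfl | rfl | rfl <;> decide
    rw [t4, t24, sg3]
    simp only [t8, t3]
    split_ifs <;> simp [s1, s2] <;> norm_num
  rw [key]; ring

lemma Ffun_mdiff : MDiff Ffun := by
  rw [UpperHalfPlane.mdifferentiable_iff]
  have h : DifferentiableOn ℂ (fun z : ℂ => eta (6 * z) / eta z) {z | 0 < z.im} := by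
    intro z hz
    have hz6 : 0 < ((6 : ℂ) * z).im := by
      have := im_mul_pos (p := 6) (by norm_num) ⟨z, hz⟩; simpa using this
    have h1 := differentiableAt_eta_of_mem_upperHalfPlaneSet hz
    have h2 := differentiableAt_eta_of_mem_upperHalfPlaneSet hz6
    have h3 : DifferentiableAt ℂ (fun z : ℂ => eta (6 * z)) z :=
      DifferentiableAt.comp z h2 (by fun_prop)
    exact (h3.div h1 (eta_ne_zero hz)).differentiableWithinAt
  refine h.congr fun z hz => ?_
  simp only [Function.comp, Ffun]
  rw [ofComplex_apply_of_im_pos hz]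

lemma Ffun_pow (τ : ℍ) : Ffun τ ^ 24 =
    (6 ^ (11 : ℕ) : ℂ)⁻¹ * (discriminant ∣[(12 : ℤ)] gm !![6, 0; 0, 1]) τ * (discriminant τ)⁻¹ := by
  rw [slash_gm_ut (by norm_num) (by norm_num)]
  simp only [discriminant, coe_gm_ut_smul (by norm_num : (0 : ℤ) < 6) (by norm_num : (0 : ℤ) < 1)]
  push_cast
  rw [Ffun, div_pow]
  norm_num
  field_simp

lemma Ffun_gr (γ : SL(2, ℤ)) : Gr (Ffun ∣[((0 : ℕ) : ℤ)] γ) 5 := by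
  have hD : (!![6, 0; 0, 1] : Matrix (Fin 2) (Fin 2) ℤ).det = 6 := by
    rw [Matrix.det_fin_two_of]; norm_num
  obtain ⟨γ1, x, y, w, hx, hw, hxw, hA⟩ := exists_hnf (!![6, 0; 0, 1] * γ.1)
    (by rw [Matrix.det_mul, hD, γ.2]; norm_num)
  rw [Matrix.det_mul, hD, γ.2, mul_one] at hxw
  have e1 : (discriminant ∣[(12 : ℤ)] gm !![6, 0; 0, 1]) ∣[(12 : ℤ)] γ
      = discriminant ∣[(12 : ℤ)] gm !![x, y; 0, w] := by
    rw [slash_gm_mul _ _ (by rw [hD]; norm_num), hA, ← slash_SL_gm _ _ (gm_ut_det hx hw), disc_slash]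
  have e2 : (Ffun ∣[((0 : ℕ) : ℤ)] γ) ^ 24 = (6 ^ (11 : ℕ) : ℂ)⁻¹ •
      ((discriminant ∣[(12 : ℤ)] gm !![x, y; 0, w]) * fun τ => (discriminant τ)⁻¹) := by
    ext τ
    have hd : denom γ τ ≠ 0 := denom_ne_zero _ _
    have a1 := congrFun e1 τ
    have a2 := congrFun (disc_slash γ) τ
    rw [SL_slash_apply] at a1 a2
    simp only [Pi.pow_apply, Pi.smul_apply, Pi.mul_apply, SL_slash_apply, smul_eq_mul]
    rw [← a1, ← a2]
    have : denom γ τ ^ (-12 : ℤ) ≠ 0 := zpow_ne_zero _ hd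
    have := discriminant_ne_zero (γ • τ)
    simp only [Nat.cast_zero, neg_zero, zpow_zero, mul_one]
    rw [Ffun_pow]
    field_simp
  have g1 := ((disc_gr.slash_ut (y := y) hx hw 12).mul disc_inv_gr).smul ((6 ^ (11 : ℕ) : ℂ)⁻¹)
  rw [← e2] at g1
  have g2 : Gr ((Ffun ∣[((0 : ℕ) : ℤ)] γ) ^ 24) 120 := by
    apply g1.mono
    have hw6 : w ≤ 6 := by nlinarith
    have hwR : (0 : ℝ) < w := by exact_mod_cast hw
    have : (1 : ℝ) / 6 ≤ x / w := by
      rw [div_le_div_iff₀ (by norm_num) hwR]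
      have : 1 * w ≤ x * 6 := by linarith
      exact_mod_cast this
    linarith
  refine IsBigO.of_pow (n := 24) (by norm_num) (g2.congr_right fun τ => ?_)
  rw [Pi.pow_apply, ← Real.exp_nat_mul]
  congr 1; push_cast; ring

theorem F_cl : Cl ((0 : ℕ) : ℤ) 5 Ffun where
  hol := Ffun_mdiff
  inv γ hb hc := by
    ext τ
    rw [SL_slash_apply, Ffun_trans γ hb hc]
    simp
  gr := Ffun_gr

end P13
end B6

namespace B6
section P14

lemma seqT_cast {m : ℕ} (Q : ℕ) (c : ℤ) (a : ℕ → ℤ) (n : ℕ) :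
    ((seqT Q c a n : ℤ) : ZMod m) = seqT Q (c : ZMod m) (fun n => ((a n : ℤ) : ZMod m)) n := by
  simp only [seqT, seqU, seqV]
  push_cast
  split_ifs <;> simp

theorem exists_vanishing (m : ℕ) [hp : Fact m.Prime] (hm5 : 5 ≤ m) : ∃ Q r : ℕ, Q.Prime ∧ 144 < Q ∧ m < Q ∧
    ∀ n j : ℕ, ¬ Q ∣ n → 144 * j + 30 = m ^ 2 * (Q ^ r * n) → bReg 6 j % m = 0 := by
  have hmR : (5 : ℝ) ≤ m := by exact_mod_cast hm5
  have hm0 : (0 : ℝ) < m := by linarith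
  obtain ⟨k1, f1, A1, -, c1, r1, h1⟩ := phi_op hm5 F_cl rep_F (by linarith) 1
    (by rw [div_lt_iff₀ hm0]; push_cast; linarith)
  obtain ⟨k2, f2, A2, hk2, c2, r2, h2⟩ := phi_op hm5 c1 r1 (by push_cast; linarith) 0
    (by rw [div_lt_iff₀ hm0]; push_cast; linarith)
  obtain ⟨Q, hQ, hQp⟩ := Nat.exists_infinite_primes (145 + m)
  haveI : Fact Q.Prime := ⟨hQp⟩
  have hQ144 : IsCoprime (Q : ℤ) 144 := by
    have : Nat.Coprime Q 144 := (Nat.Prime.coprime_iff_not_dvd hQp).mpr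
      fun h => by have := Nat.le_of_dvd (by norm_num) h; omega
    exact_mod_cast Nat.isCoprime_iff_coprime.mpr this
  have hQ24 : IsCoprime (Q : ℤ) 24 := IsCoprime.of_mul_right_left (z := 6) (by norm_num; exact hQ144)
  have hQm : IsUnit ((Q : ℕ) : ZMod m) := by
    rw [ZMod.isUnit_iff_coprime]
    exact (Nat.coprime_primes hQp hp.out).mpr (by omega)
  obtain ⟨k, rfl⟩ : ∃ k, k2 = k + 1 := ⟨k2 - 1, by omega⟩
  set c : ℤ := eps Q * Q ^ k with hc
  have hcu : IsUnit ((c : ℤ) : ZMod m) := by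
    rw [hc]; push_cast
    refine IsUnit.mul ?_ (hQm.pow k)
    refine IsUnit.of_mul_eq_one ((eps Q : ℤ) : ZMod m) ?_
    have := congrArg (Int.cast : ℤ → ZMod m) (eps_sq hQ24)
    push_cast at this; exact this
  rw [Int.cast_zero] at c2
  obtain ⟨r, hr⟩ := seq_finite_argument hQp.pos ((c : ℤ) : ZMod m) hcu (Vset ((k + 1 : ℕ) : ℤ) m)
    (Vset_finite _ m) ⟨0, Submodule.zero_mem _, by ext n; simp⟩ (by
      rintro u ⟨A, hA, rfl⟩ v ⟨B, hB, rfl⟩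
      obtain ⟨g, hg, hgB⟩ := hB
      have hT : serT Q c B ∈ Lam ((k + 1 : ℕ) : ℤ) := by
        refine ⟨heckeT Q ((k + 1 : ℕ) : ℤ) g, ?_, ?_⟩
        · have := hg.hecke (Q := Q) hQ144 le_rfl
          rwa [zero_div] at this
        · have := hgB.hecke (Q := Q) (k := k)
          push_cast
          exact this
      refine ⟨serT Q c B - c • A, Submodule.sub_mem _ hT (Submodule.smul_mem _ _ hA), ?_⟩
      ext n
      have e1 : PowerSeries.coeff n (serT Q c B) = seqT Q c (fun n => PowerSeries.coeff n B) n := by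
        rw [serT, PowerSeries.coeff_mk]
      rw [map_sub, e1, map_smul, smul_eq_mul]
      push_cast
      rw [seqT_cast]) (fun n => ((PowerSeries.coeff n A2 : ℤ) : ZMod m)) ⟨A2, ⟨f2, c2, r2⟩, rfl⟩
  refine ⟨Q, r, hQp, by omega, by omega, fun n j hn hj => ?_⟩
  have h := hr n hn
  rw [h2, h1] at h
  have e : m * (m * (Q ^ r * n)) = 144 * j + 30 := by rw [hj]; ring
  rw [e, FS_coeff] at h
  rw [Int.cast_natCast, ZMod.natCast_eq_zero_iff] at h
  exact Nat.mod_eq_zero_of_dvd h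

end P14
end B6

theorem b6_ramanujan_type (m : ℕ) (hm : m.Prime) (hm5 : 5 ≤ m) :
    ∃ A B : ℕ, 0 < B ∧ B < A ∧ ∀ n : ℕ, bReg 6 (A * n + B) % m = 0 := by
  haveI : Fact m.Prime := ⟨hm⟩
  obtain ⟨Q, r, hQ, hQ144, hQm, H⟩ := B6.exists_vanishing m hm5
  have hm24 : Nat.Coprime 24 m := by
    rw [Nat.coprime_comm, Nat.Prime.coprime_iff_not_dvd hm]
    intro h
    have h2 := (hm.dvd_mul (m := 8) (n := 3)).mp (by norm_num; exact h)
    rcases h2 with h2 | h2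
    · have := Nat.le_of_dvd (by norm_num) h2
      have h3 := hm.dvd_of_dvd_pow (n := 3) (m := 2) (by norm_num; exact h2)
      have := Nat.le_of_dvd (by norm_num) h3
      omega
    · have := Nat.le_of_dvd (by norm_num) h2
      omega
  have hQ24 : Nat.Coprime 24 Q := by
    rw [Nat.coprime_comm, Nat.Prime.coprime_iff_not_dvd hQ]
    intro h
    have := Nat.le_of_dvd (by norm_num) h
    omega
  have hmQ : Nat.Coprime m Q := (Nat.coprime_primes hm hQ).mpr (by omega)
  have hA0 : 0 < m ^ 2 * Q ^ (r + 1) := Nat.mul_pos (pow_pos hm.pos _) (pow_pos hQ.pos _)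
  set A0 := m ^ 2 * Q ^ (r + 1) with hA0d
  -- find `B0` with `24 B0 + 5 ≡ m^2 Q^r (mod A0)`
  obtain ⟨B0, hB0⟩ : ∃ B0 : ℕ, 24 * B0 + 5 ≡ m ^ 2 * Q ^ r [MOD A0] := by
    have hcop : Nat.Coprime 24 A0 := (hm24.pow_right 2).mul_right (hQ24.pow_right (r + 1))
    haveI : NeZero A0 := ⟨hA0.ne'⟩
    refine ⟨(((24 : ℕ) : ZMod A0)⁻¹ * ((m ^ 2 * Q ^ r : ℕ) - 5 : ZMod A0)).val, ?_⟩
    rw [← ZMod.natCast_eq_natCast_iff]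
    have h1 : (24 : ZMod A0) * (24 : ZMod A0)⁻¹ = 1 := by
      have := ZMod.coe_mul_inv_eq_one 24 hcop
      exact_mod_cast this
    push_cast
    rw [ZMod.natCast_zmod_val]
    linear_combination ((m : ZMod A0) ^ 2 * (Q : ZMod A0) ^ r - 5) * h1
  refine ⟨2 * A0, B0 % A0 + A0, by omega, by have := Nat.mod_lt B0 hA0; omega, fun n => ?_⟩
  set j := 2 * A0 * n + (B0 % A0 + A0) with hj
  have hjm : 24 * j + 5 ≡ m ^ 2 * Q ^ r [MOD A0] := by
    refine Nat.ModEq.trans (Nat.ModEq.add_right 5 (Nat.ModEq.mul_left 24 ?_)) hB0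
    rw [hj]
    have : 2 * A0 * n + (B0 % A0 + A0) = B0 % A0 + A0 * (2 * n + 1) := by ring
    rw [this]
    unfold Nat.ModEq
    simp
  have hd0 : m ^ 2 * Q ^ r ∣ A0 := ⟨Q, by rw [hA0d]; ring⟩
  obtain ⟨t, ht⟩ : m ^ 2 * Q ^ r ∣ 24 * j + 5 :=
    ((hjm.of_dvd hd0).dvd_iff dvd_rfl).mpr dvd_rfl
  have hpos : 0 < m ^ 2 * Q ^ r := Nat.mul_pos (pow_pos hm.pos _) (pow_pos hQ.pos _)
  have htQ : t ≡ 1 [MOD Q] := by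
    rw [ht, show A0 = (m ^ 2 * Q ^ r) * Q by rw [hA0d]; ring] at hjm
    refine Nat.ModEq.mul_left_cancel' hpos.ne' ?_
    rw [mul_one]; exact hjm
  refine H (6 * t) j ?_ (by rw [show 144 * j + 30 = 6 * (24 * j + 5) by ring, ht]; ring)
  intro h
  rcases (hQ.dvd_mul).mp h with h | h
  · have := Nat.le_of_dvd (by norm_num) h; omega
  · have h1 : Q ∣ 1 := (htQ.dvd_iff dvd_rfl).mp h
    have := Nat.le_of_dvd one_pos h1
    omega
end

section
/- If l = 13, then b_4(398) ≢ 0 (mod 3). In particular, the family b_4(3l(ln+j) + (17l^2-1)/8) ≡ 0 (mod 3) fails for l = 13, n = 0, j = 1. -/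
open Polynomial in
/-- The product of the first `k` factors of the Glaisher product, as a polynomial. -/
noncomputable def glaisherPoly (k : ℕ) : Polynomial ℕ :=
  ∏ i ∈ Finset.range k, ∑ j ∈ Finset.range 4, (X : Polynomial ℕ) ^ ((i + 1) * j)

open Polynomial in
lemma glaisherPoly_coeff_succ (n k : ℕ) (h : n ≤ k) :
    (glaisherPoly (k + 1)).coeff n = (glaisherPoly k).coeff n := by
  have e : glaisherPoly (k + 1) = glaisherPoly k +
      (glaisherPoly k * (1 + X ^ (k + 1) + X ^ (2 * (k + 1)))) * X ^ (k + 1) := by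
    rw [glaisherPoly, Finset.prod_range_succ, ← glaisherPoly]
    simp only [Finset.sum_range_succ, Finset.sum_range_zero]
    ring
  rw [e, coeff_add, coeff_mul_X_pow', if_neg (by omega), add_zero]

lemma glaisherPoly_coeff_stable (n k : ℕ) (h : n ≤ k) :
    (glaisherPoly k).coeff n = (glaisherPoly n).coeff n := by
  induction k, h using Nat.le_induction with
  | base => rfl
  | succ k hk ih => rw [glaisherPoly_coeff_succ n k hk, ih]

open PowerSeries.WithPiTopology in
lemma glaisherPoly_coeff (n k : ℕ) (h : n ≤ k) :
    (glaisherPoly k).coeff n = (Nat.Partition.countRestricted n 4).card := by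
  have H := (Nat.Partition.hasProd_powerSeriesMk_card_countRestricted ℕ
    (m := 4) (by norm_num)).tendsto_prod_nat
  have H2 := ((PowerSeries.WithPiTopology.continuous_coeff ℕ n).tendsto _).comp H
  rw [nhds_discrete, Filter.tendsto_pure] at H2
  obtain ⟨K, hK1, hK2⟩ := (H2.and (Filter.eventually_ge_atTop n)).exists
  rw [glaisherPoly_coeff_stable n k h, ← glaisherPoly_coeff_stable n K hK2]
  simp only [Function.comp, PowerSeries.coeff_mk, Nat.cast_id] at hK1
  rw [← hK1, ← Polynomial.coeff_coe]
  congr 1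
  have : ((glaisherPoly K : Polynomial ℕ) : PowerSeries ℕ) =
      Polynomial.coeToPowerSeries.ringHom (glaisherPoly K) := rfl
  rw [this, glaisherPoly, map_prod]
  simp

lemma card_countRestricted_lt (n : ℕ) (h : n ≤ 398) :
    (Nat.Partition.countRestricted n 4).card < 2 ^ 398 := by
  calc _ ≤ Fintype.card n.Partition := Finset.card_le_univ _
    _ ≤ Fintype.card (Composition n) :=
      Fintype.card_le_of_surjective _ Nat.Partition.ofComposition_surj
    _ = 2 ^ (n - 1) := composition_card n
    _ < 2 ^ 398 := Nat.pow_lt_pow_right (by norm_num) (by omega)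

open Polynomial in
/-- Kronecker substitution: reading off a coefficient as a digit. -/
lemma eval_div_pow_mod (x n : ℕ) (p : Polynomial ℕ) (h : ∀ i ≤ n, p.coeff i < x) :
    p.eval x / x ^ n % x = p.coeff n := by
  induction n generalizing p with
  | zero =>
    have e : p.eval x = x * p.divX.eval x + p.coeff 0 := by
      conv_lhs => rw [← divX_mul_X_add p]
      simp [mul_comm]
    rw [e, pow_zero, Nat.div_one, Nat.mul_add_mod, Nat.mod_eq_of_lt (h 0 le_rfl)]
  | succ n ih =>
    have e : p.eval x = x * p.divX.eval x + p.coeff 0 := by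
      conv_lhs => rw [← divX_mul_X_add p]
      simp [mul_comm]
    have h0 := h 0 (Nat.zero_le _)
    have e2 : p.eval x / x = p.divX.eval x := by
      rw [e, Nat.mul_add_div (by omega), Nat.div_eq_of_lt h0, add_zero]
    rw [pow_succ', ← Nat.div_div_eq_div_mul, e2, ih]
    · rw [coeff_divX]
    · intro i hi
      rw [coeff_divX]
      exact h _ (by omega)

/-- Value of the truncated product at `x`, modulo `M`. -/
def prodMod (x M : ℕ) (k : ℕ) : ℕ :=
  Nat.rec 1 (fun i r =>
    (r * ((1 + x ^ (i + 1) + x ^ (2 * (i + 1)) + x ^ (3 * (i + 1))) % M)) % M) k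

lemma prodMod_modEq (x M k : ℕ) : prodMod x M k ≡ (glaisherPoly k).eval x [MOD M] := by
  induction k with
  | zero => simp [prodMod, glaisherPoly]; rfl
  | succ k ih =>
    have e : (glaisherPoly (k + 1)).eval x = (glaisherPoly k).eval x *
        (1 + x ^ (k + 1) + x ^ (2 * (k + 1)) + x ^ (3 * (k + 1))) := by
      rw [glaisherPoly, Finset.prod_range_succ, ← glaisherPoly]
      simp [Finset.sum_range_succ, mul_comm]
    rw [e]
    exact (Nat.mod_modEq _ _).trans (ih.mul (Nat.mod_modEq _ _))

lemma prodMod_value :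
    (prodMod (2 ^ 398) ((2 ^ 398) ^ 399) 398 % (2 ^ 398) ^ 399) / (2 ^ 398) ^ 398 % 2 ^ 398
      = 29400557676581008 := by
  decide +kernel

lemma bReg_value : bReg 4 398 = 29400557676581008 := by
  have h1 : bReg 4 398 = (Nat.Partition.countRestricted 398 4).card := by
    rw [← Nat.Partition.card_restricted_eq_card_countRestricted 398 (by norm_num)]
    unfold bReg Nat.Partition.restricted
    congr
  have h2 := eval_div_pow_mod (2 ^ 398) 398 (glaisherPoly 398) (fun i hi => by
    rw [glaisherPoly_coeff i 398 hi]; exact card_countRestricted_lt i hi)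
  have h3 := prodMod_value
  rw [prodMod_modEq (2 ^ 398) ((2 ^ 398) ^ 399) 398, pow_succ (2 ^ 398) 398,
    Nat.mod_mul_right_div_self, Nat.mod_mod, h2, glaisherPoly_coeff 398 398 le_rfl] at h3
  rw [h1, h3]

/-- `b_4(398) ≢ 0 (mod 3)`: the candidate family
`b_4(3l(ln+j) + (17l²-1)/8) ≡ 0 (mod 3)` fails for `l = 13`, `n = 0`, `j = 1`,
since `3·13·(13·0+1) + (17·13²-1)/8 = 398`. -/
theorem b4_398_not_zero_mod_three :
    3 * 13 * (13 * 0 + 1) + (17 * 13 ^ 2 - 1) / 8 = 398 ∧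
    bReg 4 398 % 3 ≠ 0 := by
  refine ⟨by norm_num, ?_⟩
  rw [bReg_value]
  norm_num
end
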